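/- Let μ be a finite positive Borel measure on [0,1). The following conditions are equivalent: (i) the operator I_μ is well defined on Q_s and bounded from Q_s into itself for some s>0; (ii) the operator I_μ is well defined on Q_s and bounded from Q_s into itself for all s>0; (iii) the operator H_μ is well defined on Q_s and bounded from Q_s into itself for some s>0; (iv) the operator H_μ is well defined on Q_s and bounded from Q_s into itself for all s>0; (v) μ is a 1-logarithmic 1-Carleson measure. -/

import Mathlib

open MeasureTheory Set Metric ENNReal

noncomputable section

namespace PaperHankel

/-- The moment of order `n` of a measure on `[0,1)`:  `μ_n = ∫_{[0,1)} t^n dμ(t)`. -/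
def mom (μ : Measure ℝ) (n : ℕ) : ℝ := ∫ t in Ico (0:ℝ) 1, t ^ n ∂μ

/-- The `n`-th Taylor coefficient of `f` at `0`. -/
def tc (f : ℂ → ℂ) (n : ℕ) : ℂ := iteratedDeriv n f 0 / n.factorial

/-- The `n`-th Taylor coefficient of `H_μ f`, namely `∑_k μ_{n+k} a_k`. -/
def hmuCoeff (μ : Measure ℝ) (f : ℂ → ℂ) (n : ℕ) : ℂ :=
  ∑' k : ℕ, (mom μ (n + k) : ℂ) * tc f k

/-- `H_μ f` is well defined: each coefficient series converges absolutely, and the resulting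
power series has radius of convergence at least `1`. -/
def HmuWD (μ : Measure ℝ) (f : ℂ → ℂ) : Prop :=
  (∀ n : ℕ, Summable fun k : ℕ => ‖(mom μ (n + k) : ℂ) * tc f k‖) ∧
  ∀ z ∈ ball (0:ℂ) 1, Summable fun n : ℕ => ‖hmuCoeff μ f n * z ^ n‖

/-- The generalized Hilbert operator induced by the Hankel matrix of moments of `μ`. -/
def Hmu (μ : Measure ℝ) (f : ℂ → ℂ) : ℂ → ℂ :=
  fun z => ∑' n : ℕ, hmuCoeff μ f n * z ^ n

/-- `I_μ f` is well defined: the defining integral converges absolutely for every `z ∈ 𝔻`. -/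
def ImuWD (μ : Measure ℝ) (f : ℂ → ℂ) : Prop :=
  ∀ z ∈ ball (0:ℂ) 1, IntegrableOn (fun t : ℝ => f t / (1 - t * z)) (Ico (0:ℝ) 1) μ

/-- The integral operator `I_μ f (z) = ∫_{[0,1)} f(t)/(1-tz) dμ(t)`. -/
def Imu (μ : Measure ℝ) (f : ℂ → ℂ) : ℂ → ℂ :=
  fun z => ∫ t in Ico (0:ℝ) 1, f t / (1 - t * z) ∂μ

/-- The `p`-th circle mean `M_p(r,f)` raised into the Hardy norm shape:
`((1/2π) ∫_0^{2π} |f(r e^{iθ})|^p dθ)^{1/p}`. -/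
def circMean (p : ℝ) (f : ℂ → ℂ) (r : ℝ) : ℝ :=
  ((2 * Real.pi)⁻¹ * ∫ θ in (0:ℝ)..(2 * Real.pi),
      ‖f (r * Complex.exp (θ * Complex.I))‖ ^ p) ^ (1 / p)

/-- Membership in the Hardy space `H^p`. -/
def MemHardy (p : ℝ) (f : ℂ → ℂ) : Prop :=
  DifferentiableOn ℂ f (ball (0:ℂ) 1) ∧ ∃ M : ℝ, ∀ r ∈ Ico (0:ℝ) 1, circMean p f r ≤ M

/-- The `H^p` norm. -/
def hardyNorm (p : ℝ) (f : ℂ → ℂ) : ℝ :=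
  sSup {x : ℝ | ∃ r ∈ Ico (0:ℝ) 1, x = circMean p f r}

/-- Membership in `H^∞`: analytic and bounded on the unit disc. -/
def MemHinf (f : ℂ → ℂ) : Prop :=
  DifferentiableOn ℂ f (ball (0:ℂ) 1) ∧ ∃ M : ℝ, ∀ z ∈ ball (0:ℂ) 1, ‖f z‖ ≤ M

/-- The `H^∞` norm. -/
def hinfNorm (f : ℂ → ℂ) : ℝ := sSup {x : ℝ | ∃ z ∈ ball (0:ℂ) 1, x = ‖f z‖}

/-- The mean `M_2(r,g) = ((1/2π) ∫_0^{2π} |g(r e^{iθ})|² dθ)^{1/2}`. -/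
def M2 (g : ℂ → ℂ) (r : ℝ) : ℝ :=
  Real.sqrt ((2 * Real.pi)⁻¹ * ∫ θ in (0:ℝ)..(2 * Real.pi),
      ‖g (r * Complex.exp (θ * Complex.I))‖ ^ 2)

/-- Membership in the mean Lipschitz space `Λ²_{1/2}`:
`M_2(r,f') = O((1-r)^{-1/2})` as `r → 1⁻`. -/
def MemLambda (f : ℂ → ℂ) : Prop :=
  DifferentiableOn ℂ f (ball (0:ℂ) 1) ∧
  ∃ C : ℝ, ∀ r ∈ Ico (0:ℝ) 1, Real.sqrt (1 - r) * M2 (deriv f) r ≤ C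

/-- The norm on `Λ²_{1/2}`. -/
def lambdaNorm (f : ℂ → ℂ) : ℝ :=
  ‖f 0‖ + sSup {x : ℝ | ∃ r ∈ Ico (0:ℝ) 1, x = Real.sqrt (1 - r) * M2 (deriv f) r}

/-- `∫_𝔻 |f'(z)|² g(z,a)^s dA(z)` with `g(z,a) = log |(1- ā z)/(z-a)|` and `dA` the
normalized area measure, computed as a lower integral in `[0,∞]`. -/
def qsInt (s : ℝ) (f : ℂ → ℂ) (a : ℂ) : ℝ≥0∞ :=
  (ENNReal.ofReal Real.pi)⁻¹ * ∫⁻ z in ball (0:ℂ) 1,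
    ENNReal.ofReal (‖deriv f z‖ ^ 2 * (Real.log ‖(1 - (starRingEnd ℂ) a * z) / (z - a)‖) ^ s)

/-- Membership in `Q_s`: analytic on `𝔻` with `ρ_{Q_s}(f)² = sup_{a ∈ 𝔻} ∫ ... < ∞`. -/
def MemQs (s : ℝ) (f : ℂ → ℂ) : Prop :=
  DifferentiableOn ℂ f (ball (0:ℂ) 1) ∧ (⨆ a ∈ ball (0:ℂ) 1, qsInt s f a) < ⊤

/-- The norm on `Q_s`, `‖f‖ = |f(0)| + ρ_{Q_s}(f)`. -/
def qsNorm (s : ℝ) (f : ℂ → ℂ) : ℝ :=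
  ‖f 0‖ + Real.sqrt (⨆ a ∈ ball (0:ℂ) 1, qsInt s f a).toReal

/-- The condition `∫_{[0,1)} tⁿ log(1/(1-t)) dμ(t) = O(1/n)`, stated with the lower
integral so that in particular the integrals are finite. -/
def LogMomentBigO (μ : Measure ℝ) : Prop :=
  ∃ C > 0, ∀ n : ℕ, 1 ≤ n →
    (∫⁻ t in Ico (0:ℝ) 1, ENNReal.ofReal (t ^ n * Real.log (1 / (1 - t))) ∂μ) ≤
      ENNReal.ofReal (C / n)

/-- Membership in the Bloch space. -/
def MemBloch (f : ℂ → ℂ) : Prop :=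
  DifferentiableOn ℂ f (ball (0:ℂ) 1) ∧
  ∃ M : ℝ, ∀ z ∈ ball (0:ℂ) 1, (1 - ‖z‖ ^ 2) * ‖deriv f z‖ ≤ M

/-- The Bloch norm `‖f‖ = |f(0)| + ρ_B(f)`. -/
def blochNorm (f : ℂ → ℂ) : ℝ :=
  ‖f 0‖ + sSup {x : ℝ | ∃ z ∈ ball (0:ℂ) 1, x = (1 - ‖z‖ ^ 2) * ‖deriv f z‖}

/-- Membership in the Besov space `B^p`. -/
def MemBesov (p : ℝ) (f : ℂ → ℂ) : Prop :=
  DifferentiableOn ℂ f (ball (0:ℂ) 1) ∧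
  IntegrableOn (fun z : ℂ => (1 - ‖z‖ ^ 2) ^ (p - 2) * ‖deriv f z‖ ^ p) (ball (0:ℂ) 1) volume

/-- The Besov norm `‖f‖ = |f(0)| + ρ_p(f)`. -/
def besovNorm (p : ℝ) (f : ℂ → ℂ) : ℝ :=
  ‖f 0‖ + (Real.pi⁻¹ *
    ∫ z in ball (0:ℂ) 1, (1 - ‖z‖ ^ 2) ^ (p - 2) * ‖deriv f z‖ ^ p) ^ (1 / p)

/-- `μ` is an `α`-logarithmic `s`-Carleson measure on `[0,1)`. -/
def IsLogCarleson (μ : Measure ℝ) (α s : ℝ) : Prop :=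
  ∃ C > 0, ∀ t ∈ Ico (0:ℝ) 1,
    (μ (Ico t 1)).toReal * Real.log (2 / (1 - t)) ^ α ≤ C * (1 - t) ^ s

/-- `μ` is an `s`-Carleson measure on `[0,1)`. -/
def IsCarleson (μ : Measure ℝ) (s : ℝ) : Prop :=
  ∃ C > 0, ∀ t ∈ Ico (0:ℝ) 1, (μ (Ico t 1)).toReal ≤ C * (1 - t) ^ s


/-- `I_μ` is well defined on `Q_{s₁}` and bounded from `Q_{s₁}` into `Q_{s₂}`. -/
def ImuBddQs (μ : Measure ℝ) (s₁ s₂ : ℝ) : Prop :=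
  (∀ f : ℂ → ℂ, MemQs s₁ f → ImuWD μ f ∧ MemQs s₂ (Imu μ f)) ∧
  ∃ C > 0, ∀ f : ℂ → ℂ, MemQs s₁ f → qsNorm s₂ (Imu μ f) ≤ C * qsNorm s₁ f

/-- `H_μ` is well defined on `Q_{s₁}` and bounded from `Q_{s₁}` into `Q_{s₂}`. -/
def HmuBddQs (μ : Measure ℝ) (s₁ s₂ : ℝ) : Prop :=
  (∀ f : ℂ → ℂ, MemQs s₁ f → HmuWD μ f ∧ MemQs s₂ (Hmu μ f)) ∧
  ∃ C > 0, ∀ f : ℂ → ℂ, MemQs s₁ f → qsNorm s₂ (Hmu μ f) ≤ C * qsNorm s₁ f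

/-!
Write `L(t) = log (2 / (1 - t))`. A function of `Q_s` grows at most like `L(|z|)`, because `Q_s`
embeds in the Bloch space, and `log (2 / (1 - z))` lies in every `Q_s` and attains this growth.

If `μ` is a `1`-logarithmic `1`-Carleson measure, then `L dμ` is a Carleson measure, so
`|(I_μ f)'(z)| ≤ ∫ L(t) / |1 - tz|² dμ(t) ≲ 1 / |1 - z|`, and the Green function estimate
`∫_𝔻 |1 - z|⁻² g(z, a)^s dA(z) ≤ K_s` puts `I_μ f` in `Q_s`. Conversely, the Bloch bound for
`I_μ (log (2 / (1 - z)))` at `x ∈ [0, 1)` bounds `L(x) μ([x, 1)) / (1 - x)`.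

The operator `H_μ` agrees with `I_μ` on `f = ∑ aₖ zᵏ` as soon as `∑ μₖ |aₖ| < ∞`. This is part of
`H_μ f` being well defined, and it follows from the Carleson condition: Cauchy–Schwarz and the
Bessel inequality on the circle of radius `√t` give `∑ tᵏ |aₖ| ≲ L(t) / √(1 - t)`, which is
`μ`-integrable.
-/

section Domination

variable {μ ν : Measure ℝ} {a b : ℝ}

lemma measure_le_of_forall_measure_Ico_le {S : Set ℝ}
    (hμν : ∀ t ∈ Ico a b, μ (Ico t b) ≤ ν (Ico t b)) (hS : S ⊆ Ico a b)
    (hup : ∀ x ∈ S, Ico x b ⊆ S) : μ S ≤ ν S := by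
  obtain rfl | hne := S.eq_empty_or_nonempty
  · simp only [measure_empty, le_refl]
  have hbdd : BddBelow S := ⟨a, fun x hx => (hS hx).1⟩
  obtain ⟨u, hu_anti, hu_lim, hu_mem⟩ := exists_seq_tendsto_sInf hne hbdd
  by_cases hinf : sInf S ∈ S
  · have hS_eq : S = Ico (sInf S) b :=
      Subset.antisymm (fun x hx => ⟨csInf_le hbdd hx, (hS hx).2⟩) (hup _ hinf)
    rw [hS_eq]
    exact hμν _ (hS hinf)
  · have hS_eq : S = ⋃ n, Ico (u n) b := by
      refine Subset.antisymm (fun x hx => ?_) (iUnion_subset fun n => hup _ (hu_mem n))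
      have hlt : sInf S < x := (csInf_le hbdd hx).lt_of_ne fun h => hinf (h ▸ hx)
      obtain ⟨n, hn⟩ := (hu_lim.eventually_lt_const hlt).exists
      exact mem_iUnion.2 ⟨n, hn.le, (hS hx).2⟩
    have hmono : Monotone fun n => Ico (u n) b := fun m n h => Ico_subset_Ico_left (hu_anti h)
    rw [hS_eq, hmono.measure_iUnion, hmono.measure_iUnion]
    exact iSup_mono fun n => hμν _ (hS (hu_mem n))

lemma setLIntegral_Ico_le_of_forall_measure_Ico_le {w : ℝ → ℝ}
    (hμν : ∀ t ∈ Ico a b, μ (Ico t b) ≤ ν (Ico t b)) (hw : MonotoneOn w (Ico a b))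
    (hw_nonneg : ∀ t ∈ Ico a b, 0 ≤ w t) :
    ∫⁻ t in Ico a b, ENNReal.ofReal (w t) ∂μ ≤ ∫⁻ t in Ico a b, ENNReal.ofReal (w t) ∂ν := by
  have layer_cake (ρ : Measure ℝ) : ∫⁻ t in Ico a b, ENNReal.ofReal (w t) ∂ρ
      = ∫⁻ y in Ioi 0, ρ ({t | y < w t} ∩ Ico a b) := by
    have h_nonneg : 0 ≤ᵐ[ρ.restrict (Ico a b)] w := by
      filter_upwards [self_mem_ae_restrict measurableSet_Ico] with t ht using hw_nonneg t ht
    rw [lintegral_eq_lintegral_meas_lt _ h_nonneg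
      (aemeasurable_restrict_of_monotoneOn measurableSet_Ico hw)]
    simp only [Measure.restrict_apply' measurableSet_Ico]
  rw [layer_cake, layer_cake]
  refine lintegral_mono fun y => ?_
  refine measure_le_of_forall_measure_Ico_le hμν inter_subset_right ?_
  rintro x ⟨hyx, hx⟩ t ht
  have ht' : t ∈ Ico a b := ⟨hx.1.trans ht.1, ht.2⟩
  exact ⟨hyx.trans_le (hw hx ht' ht.1), ht'⟩

end Domination

section LogCarleson

/-- The logarithmic weight `log (2 / (1 - t))` of `IsLogCarleson`. It is at least `log 2` on
`[0, 1)`, and is the growth rate of functions in `Q_s`. -/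
def logWeight (t : ℝ) : ℝ := Real.log (2 / (1 - t))

lemma measurable_logWeight : Measurable logWeight := by
  unfold logWeight; fun_prop

lemma logWeight_eq_sub {t : ℝ} (ht : t < 1) :
    logWeight t = Real.log 2 - Real.log (1 - t) :=
  Real.log_div two_ne_zero (sub_pos.2 ht).ne'

lemma monotoneOn_logWeight : MonotoneOn logWeight (Iio 1) := by
  intro x hx y hy hxy
  have hy' : 0 < 1 - y := sub_pos.2 hy
  have hx' : 0 < 1 - x := sub_pos.2 hx
  unfold logWeight
  gcongr

lemma log_two_le_logWeight {t : ℝ} (ht : t ∈ Ico (0 : ℝ) 1) : Real.log 2 ≤ logWeight t := by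
  simpa [logWeight] using
    monotoneOn_logWeight (mem_Iio.2 zero_lt_one) (mem_Iio.2 ht.2) ht.1

lemma logWeight_pos {t : ℝ} (ht : t ∈ Ico (0 : ℝ) 1) : 0 < logWeight t :=
  (Real.log_pos one_lt_two).trans_le (log_two_le_logWeight ht)

lemma logWeight_midpoint_le {t : ℝ} (ht : t ∈ Ico (0 : ℝ) 1) :
    logWeight ((1 + t) / 2) ≤ 2 * logWeight t := by
  have h_half : 1 - (1 + t) / 2 = (1 - t) / 2 := by ring
  have h := log_two_le_logWeight ht
  rw [logWeight_eq_sub ht.2] at h ⊢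
  rw [logWeight_eq_sub (by linarith [ht.2]), h_half,
    Real.log_div (sub_pos.2 ht.2).ne' two_ne_zero]
  linarith

lemma logWeight_sqrt_le {t : ℝ} (ht : t ∈ Ico (0 : ℝ) 1) :
    logWeight (√t) ≤ 2 * logWeight t := by
  have hsqrt : √t ≤ (1 + t) / 2 := by nlinarith [Real.sq_sqrt ht.1, sq_nonneg (√t - 1)]
  have hlt : (1 + t) / 2 < 1 := by linarith [ht.2]
  exact (monotoneOn_logWeight (hsqrt.trans_lt hlt) hlt hsqrt).trans (logWeight_midpoint_le ht)

variable {μ : Measure ℝ} [IsFiniteMeasure μ] {α : ℝ}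

lemma ofReal_mul_div_le_withDensity_logWeight {C t : ℝ} (hC : 0 ≤ C) (hα : 0 ≤ α)
    (ht : t ∈ Ico (0 : ℝ) 1) :
    ENNReal.ofReal (C * (1 - t) / logWeight t ^ α) ≤
      volume.withDensity (fun x => ENNReal.ofReal (2 * 2 ^ α * C / logWeight x ^ α))
        (Ico t 1) := by
  have ht1 : 0 < 1 - t := sub_pos.2 ht.2
  have hL := logWeight_pos ht
  have h_density : ∀ x ∈ Ico t ((1 + t) / 2),
      2 * C / logWeight t ^ α ≤ 2 * 2 ^ α * C / logWeight x ^ α := by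
    intro x hx
    have hx01 : x ∈ Ico (0 : ℝ) 1 := ⟨ht.1.trans hx.1, by linarith [hx.2]⟩
    have hLx : 0 < logWeight x := logWeight_pos hx01
    have hLx_le : logWeight x ≤ 2 * logWeight t :=
      (monotoneOn_logWeight hx01.2 (show (1 + t) / 2 < 1 by linarith) hx.2.le).trans
        (logWeight_midpoint_le ht)
    calc 2 * C / logWeight t ^ α = 2 * 2 ^ α * C / (2 * logWeight t) ^ α := by
          rw [Real.mul_rpow two_pos.le hL.le]; field_simp
      _ ≤ 2 * 2 ^ α * C / logWeight x ^ α := by gcongr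
  calc ENNReal.ofReal (C * (1 - t) / logWeight t ^ α)
      = ∫⁻ _ in Ico t ((1 + t) / 2), ENNReal.ofReal (2 * C / logWeight t ^ α) := by
        rw [setLIntegral_const, Real.volume_Ico, ← ENNReal.ofReal_mul (by positivity)]
        congr 1; ring
    _ ≤ ∫⁻ x in Ico t ((1 + t) / 2), ENNReal.ofReal (2 * 2 ^ α * C / logWeight x ^ α) :=
        setLIntegral_mono' measurableSet_Ico fun x hx =>
          ENNReal.ofReal_le_ofReal (h_density x hx)
    _ ≤ ∫⁻ x in Ico t 1, ENNReal.ofReal (2 * 2 ^ α * C / logWeight x ^ α) :=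
        lintegral_mono_set (Ico_subset_Ico_right (by linarith))
    _ = _ := (withDensity_apply _ measurableSet_Ico).symm

/-- Compared on the intervals `[t, 1)`, a logarithmic Carleson measure is dominated by a multiple
of `(log (2 / (1 - t)))⁻ᵅ dt`, and such comparisons pass to integrals of monotone functions. -/
lemma IsLogCarleson.exists_setLIntegral_logWeight_rpow_mul_le (hμ : IsLogCarleson μ α 1)
    (hα : 0 ≤ α) : ∃ C > 0, ∀ w : ℝ → ℝ, MonotoneOn w (Ico 0 1) → (∀ t ∈ Ico 0 1, 0 ≤ w t) →
      ∫⁻ t in Ico (0 : ℝ) 1, ENNReal.ofReal (logWeight t ^ α * w t) ∂μ ≤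
        ENNReal.ofReal C * ∫⁻ t in Ico (0 : ℝ) 1, ENNReal.ofReal (w t) := by
  obtain ⟨C, hC, hμC⟩ := hμ
  refine ⟨2 * 2 ^ α * C, by positivity, fun w hw hw_nonneg => ?_⟩
  set ρ : ℝ → ℝ≥0∞ := fun x => ENNReal.ofReal (2 * 2 ^ α * C / logWeight x ^ α)
  have hρ : Measurable ρ := by have := measurable_logWeight; fun_prop
  have h_compare : ∀ t ∈ Ico (0 : ℝ) 1, μ (Ico t 1) ≤ volume.withDensity ρ (Ico t 1) := by
    intro t ht
    refine le_trans ?_ (ofReal_mul_div_le_withDensity_logWeight hC.le hα ht)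
    have ht1 := sub_pos.2 ht.2
    have hL := logWeight_pos ht
    rw [ENNReal.le_ofReal_iff_toReal_le (measure_ne_top _ _) (by positivity),
      le_div_iff₀ (by positivity)]
    simpa only [Real.rpow_one, logWeight] using hμC t ht
  have h_mono : MonotoneOn (fun t => logWeight t ^ α * w t) (Ico 0 1) := by
    intro x hx y hy hxy
    have hL := monotoneOn_logWeight hx.2 hy.2 hxy
    have hLx := (logWeight_pos hx).le
    exact mul_le_mul (Real.rpow_le_rpow hLx hL hα) (hw hx hy hxy) (hw_nonneg x hx)
      (Real.rpow_nonneg (hLx.trans hL) _)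
  calc ∫⁻ t in Ico (0 : ℝ) 1, ENNReal.ofReal (logWeight t ^ α * w t) ∂μ
      ≤ ∫⁻ t in Ico (0 : ℝ) 1, ENNReal.ofReal (logWeight t ^ α * w t) ∂volume.withDensity ρ :=
        setLIntegral_Ico_le_of_forall_measure_Ico_le h_compare h_mono fun t ht =>
          mul_nonneg (Real.rpow_nonneg (logWeight_pos ht).le _) (hw_nonneg t ht)
    _ ≤ ∫⁻ t in Ico (0 : ℝ) 1, ρ t * ENNReal.ofReal (logWeight t ^ α * w t) := by
        rw [restrict_withDensity measurableSet_Ico]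
        exact lintegral_withDensity_le_lintegral_mul _ hρ _
    _ = ∫⁻ t in Ico (0 : ℝ) 1, ENNReal.ofReal (2 * 2 ^ α * C) * ENNReal.ofReal (w t) := by
        refine setLIntegral_congr_fun measurableSet_Ico fun t ht => ?_
        have hL := Real.rpow_pos_of_pos (logWeight_pos ht) α
        simp only [ρ]
        rw [← ENNReal.ofReal_mul (by positivity), ← ENNReal.ofReal_mul (by positivity)]
        congr 1; field_simp
    _ = ENNReal.ofReal (2 * 2 ^ α * C) * ∫⁻ t in Ico (0 : ℝ) 1, ENNReal.ofReal (w t) :=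
        lintegral_const_mul' _ _ ENNReal.ofReal_ne_top

end LogCarleson

section CarlesonIntegrals

lemma setLIntegral_Ico_ofReal_deriv_of_nonneg {a b : ℝ} {F F' : ℝ → ℝ} (hab : a ≤ b)
    (hF : ContinuousOn F (Icc a b)) (hF' : ∀ x ∈ Ioo a b, HasDerivAt F (F' x) x)
    (h_nonneg : ∀ x ∈ Ioo a b, 0 ≤ F' x) :
    ∫⁻ x in Ico a b, ENNReal.ofReal (F' x) = ENNReal.ofReal (F b - F a) := by
  have h_int := intervalIntegral.integrableOn_deriv_of_nonneg hF hF' h_nonneg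
  rw [← intervalIntegral.integral_eq_sub_of_hasDerivAt_of_le hab hF hF'
      ((intervalIntegrable_iff_integrableOn_Ioc_of_le hab).2 h_int),
    intervalIntegral.integral_of_le hab, integral_Ioc_eq_integral_Ioo,
    ofReal_integral_eq_lintegral_ofReal (h_int.mono_set Ioo_subset_Ioc_self)
      (by filter_upwards [self_mem_ae_restrict measurableSet_Ioo] with x hx using h_nonneg x hx)]
  exact setLIntegral_congr Ioo_ae_eq_Ico.symm

lemma one_sub_le_norm_one_sub_ofReal_mul {t : ℝ} {z : ℂ} (ht : 0 ≤ t) (hz : ‖z‖ ≤ 1) :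
    1 - t ≤ ‖1 - t * z‖ := by
  have h : ‖(t : ℂ) * z‖ ≤ t := by
    rw [norm_mul, Complex.norm_of_nonneg ht]
    exact mul_le_of_le_one_right ht hz
  simpa using (sub_le_sub_left h 1).trans (by simpa using norm_sub_norm_le 1 ((t : ℂ) * z))

lemma one_sub_add_norm_one_sub_le {t : ℝ} {z : ℂ} (ht : t ∈ Icc (0 : ℝ) 1) (hz : ‖z‖ ≤ 1) :
    (1 - t) + ‖1 - z‖ ≤ 3 * ‖1 - t * z‖ := by
  have h1 := one_sub_le_norm_one_sub_ofReal_mul ht.1 hz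
  have h2 : ‖1 - z‖ ≤ ‖1 - t * z‖ + (1 - t) := by
    calc ‖1 - z‖ = ‖(1 - t * z) - ((1 - t : ℝ) : ℂ) * z‖ := by congr 1; push_cast; ring
      _ ≤ ‖1 - t * z‖ + (1 - t) * ‖z‖ := by
        refine (norm_sub_le _ _).trans_eq ?_
        rw [norm_mul, Complex.norm_of_nonneg (sub_nonneg.2 ht.2)]
      _ ≤ ‖1 - t * z‖ + (1 - t) := by
        gcongr; exact mul_le_of_le_one_right (sub_nonneg.2 ht.2) hz
  linarith

lemma norm_one_sub_pos {z : ℂ} (hz : ‖z‖ < 1) : 0 < ‖1 - z‖ :=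
  norm_pos_iff.2 (sub_ne_zero.2 fun h => by simp [← h] at hz)

lemma setLIntegral_Ico_div_one_sub_add_sq_le {c d : ℝ} (hc : 0 ≤ c) (hd : 0 < d) :
    ∫⁻ t in Ico (0 : ℝ) 1, ENNReal.ofReal (c / ((1 - t) + d) ^ 2) ≤ ENNReal.ofReal (c / d) := by
  have h_deriv : ∀ t ∈ Ioo (0 : ℝ) 1,
      HasDerivAt (fun t => c / ((1 - t) + d)) (c / ((1 - t) + d) ^ 2) t := by
    intro t ht
    have h_ne : (1 - t) + d ≠ 0 := by linarith [ht.2]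
    exact ((hasDerivAt_const t c).fun_div (((hasDerivAt_id' t).const_sub 1).add_const d) h_ne)
      |>.congr_deriv (by ring)
  have h_cont : ContinuousOn (fun t => c / ((1 - t) + d)) (Icc 0 1) :=
    continuousOn_const.div (by fun_prop) fun t ht => by linarith [ht.2]
  rw [setLIntegral_Ico_ofReal_deriv_of_nonneg zero_le_one h_cont h_deriv fun t _ => by positivity]
  refine ENNReal.ofReal_le_ofReal ?_
  rw [sub_self, zero_add]
  exact sub_le_self _ (by positivity)

variable {μ : Measure ℝ} [IsFiniteMeasure μ]

lemma IsLogCarleson.exists_setLIntegral_kernel_le (hμ : IsLogCarleson μ 1 1) :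
    ∃ C > 0, ∀ z ∈ ball (0 : ℂ) 1,
      ∫⁻ t in Ico (0 : ℝ) 1, ENNReal.ofReal (logWeight t / ‖1 - t * z‖ ^ 2) ∂μ ≤
        ENNReal.ofReal (C / ‖1 - z‖) := by
  obtain ⟨C, hC, hμC⟩ := hμ.exists_setLIntegral_logWeight_rpow_mul_le zero_le_one
  refine ⟨C * 9, by positivity, fun z hz => ?_⟩
  rw [mem_ball_zero_iff] at hz
  set d := ‖1 - z‖
  have hd : 0 < d := norm_one_sub_pos hz
  have h_mono : MonotoneOn (fun t : ℝ => 9 / ((1 - t) + d) ^ 2) (Ico 0 1) := by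
    intro x _ y hy hxy
    have hy' := sub_pos.2 hy.2
    dsimp only
    gcongr
  have h_kernel : ∀ t ∈ Ico (0 : ℝ) 1,
      logWeight t / ‖1 - t * z‖ ^ 2 ≤ logWeight t ^ (1 : ℝ) * (9 / ((1 - t) + d) ^ 2) := by
    intro t ht
    have ht1 := sub_pos.2 ht.2
    have h := one_sub_add_norm_one_sub_le (Ico_subset_Icc_self ht) hz.le
    have h_pos : 0 < ‖1 - t * z‖ := by linarith
    have h_sq : ((1 - t) + d) ^ 2 ≤ (3 * ‖1 - t * z‖) ^ 2 := by gcongr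
    rw [Real.rpow_one, div_eq_mul_one_div]
    refine mul_le_mul_of_nonneg_left ?_ (logWeight_pos ht).le
    rw [div_le_div_iff₀ (by positivity) (by positivity)]
    linarith
  calc ∫⁻ t in Ico (0 : ℝ) 1, ENNReal.ofReal (logWeight t / ‖1 - t * z‖ ^ 2) ∂μ
      ≤ ∫⁻ t in Ico (0 : ℝ) 1,
          ENNReal.ofReal (logWeight t ^ (1 : ℝ) * (9 / ((1 - t) + d) ^ 2)) ∂μ :=
        setLIntegral_mono' measurableSet_Ico fun t ht => ENNReal.ofReal_le_ofReal (h_kernel t ht)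
    _ ≤ ENNReal.ofReal C * ∫⁻ t in Ico (0 : ℝ) 1, ENNReal.ofReal (9 / ((1 - t) + d) ^ 2) :=
        hμC _ h_mono fun t _ => by positivity
    _ ≤ ENNReal.ofReal C * ENNReal.ofReal (9 / d) := by
        gcongr; exact setLIntegral_Ico_div_one_sub_add_sq_le (by norm_num) hd
    _ = ENNReal.ofReal (C * 9 / d) := by rw [← ENNReal.ofReal_mul hC.le, mul_div_assoc]

lemma IsLogCarleson.integrableOn_logWeight_div_sqrt (hμ : IsLogCarleson μ 1 1) :
    IntegrableOn (fun t => logWeight t / √(1 - t)) (Ico 0 1) μ := by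
  obtain ⟨C, -, hμC⟩ := hμ.exists_setLIntegral_logWeight_rpow_mul_le zero_le_one
  have h_mono : MonotoneOn (fun t : ℝ => 1 / √(1 - t)) (Ico 0 1) := by
    intro x _ y hy hxy
    have hy' : 0 < √(1 - y) := Real.sqrt_pos.2 (sub_pos.2 hy.2)
    dsimp only
    gcongr
  have h_deriv : ∀ t ∈ Ioo (0 : ℝ) 1, HasDerivAt (fun t => -2 * √(1 - t)) (1 / √(1 - t)) t := by
    intro t ht
    exact (((hasDerivAt_id' t).const_sub 1).sqrt (sub_pos.2 ht.2).ne').const_mul (-2)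
      |>.congr_deriv (by ring)
  have h_lebesgue : ∫⁻ t in Ico (0 : ℝ) 1, ENNReal.ofReal (1 / √(1 - t)) < ⊤ := by
    rw [setLIntegral_Ico_ofReal_deriv_of_nonneg zero_le_one (by fun_prop) h_deriv
      fun t _ => by positivity]
    exact ENNReal.ofReal_lt_top
  refine ⟨(measurable_logWeight.div (by fun_prop)).aestronglyMeasurable, ?_⟩
  rw [hasFiniteIntegral_iff_ofReal]
  · refine lt_of_le_of_lt ?_ (ENNReal.mul_lt_top (ENNReal.ofReal_lt_top (r := C)) h_lebesgue)
    simpa only [Real.rpow_one, mul_one_div] using hμC _ h_mono fun t _ => by positivity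
  · filter_upwards [self_mem_ae_restrict measurableSet_Ico] with t ht
    exact div_nonneg (logWeight_pos ht).le (Real.sqrt_nonneg _)

end CarlesonIntegrals

section RadialIntegrals

lemma log_one_add_le_rpow_div {y ε : ℝ} (hy : 0 ≤ y) (hε : 0 < ε) (hε1 : ε ≤ 1) :
    Real.log (1 + y) ≤ y ^ ε / ε := by
  have h_add : (1 + y) ^ ε ≤ 1 + y ^ ε := by
    simpa using Real.rpow_add_le_add_rpow zero_le_one hy hε.le hε1
  rw [le_div_iff₀ hε, mul_comm, ← Real.log_rpow (by positivity)]
  exact (Real.log_le_sub_one_of_pos (by positivity)).trans (by linarith)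

lemma integrableOn_Ioo_rpow_mul_one_sub_rpow {p q : ℝ} (hp : -1 < p) (hq : -1 < q) :
    IntegrableOn (fun r : ℝ => r ^ p * (1 - r) ^ q) (Ioo 0 1) := by
  have h_beta := Complex.betaIntegral_convergent (u := (p + 1 : ℝ)) (v := (q + 1 : ℝ))
    (by rw [Complex.ofReal_re]; linarith) (by rw [Complex.ofReal_re]; linarith)
  rw [intervalIntegrable_iff_integrableOn_Ioo_of_le zero_le_one] at h_beta
  refine (integrableOn_congr_fun (fun r hr => ?_) measurableSet_Ioo).1 h_beta.norm
  have hr0 : 0 ≤ r := hr.1.le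
  have hr1 : 0 ≤ 1 - r := sub_nonneg.2 hr.2.le
  have h_cast : ((r : ℂ) ^ (((p + 1 : ℝ) : ℂ) - 1) * (1 - (r : ℂ)) ^ (((q + 1 : ℝ) : ℂ) - 1))
      = ((r ^ p * (1 - r) ^ q : ℝ) : ℂ) := by
    push_cast [Complex.ofReal_cpow hr0, Complex.ofReal_cpow hr1]
    simp only [add_sub_cancel_right]
  rw [h_cast, Complex.norm_of_nonneg (by positivity)]

lemma integrableOn_Ioi_one_rpow_mul_sub_one_rpow {p q : ℝ} (hq : -1 < q) (hpq : p + q < -1) :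
    IntegrableOn (fun r : ℝ => r ^ p * (r - 1) ^ q) (Ioi 1) := by
  have h_image : Inv.inv '' Ioo (0 : ℝ) 1 = Ioi 1 := by
    rw [image_inv_eq_inv, inv_Ioo_0_left one_pos, inv_one]
  rw [← h_image, integrableOn_image_iff_integrableOn_abs_deriv_smul measurableSet_Ioo
    (fun r hr => (hasDerivAt_inv hr.1.ne').hasDerivWithinAt) inv_injective.injOn]
  refine (integrableOn_congr_fun (fun r hr => ?_) measurableSet_Ioo).1
    (integrableOn_Ioo_rpow_mul_one_sub_rpow (p := -2 - p - q) (by linarith) hq)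
  have hr0 : 0 < r := hr.1
  have hr1 : 0 ≤ 1 - r := sub_nonneg.2 hr.2.le
  have h_sub : r⁻¹ - 1 = (1 - r) * r⁻¹ := by field_simp
  rw [abs_neg, abs_of_pos (by positivity), h_sub, Real.mul_rpow hr1 (by positivity),
    Real.inv_rpow hr0.le, Real.inv_rpow hr0.le, Real.rpow_sub hr0, Real.rpow_sub hr0,
    Real.rpow_neg hr0.le, Real.rpow_two, smul_eq_mul]
  field_simp

lemma integrableOn_Ioi_rpow_mul_abs_sub_one_rpow {p q : ℝ} (hp : -1 < p) (hq : -1 < q)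
    (hpq : p + q < -1) : IntegrableOn (fun r : ℝ => r ^ p * |r - 1| ^ q) (Ioi 0) := by
  rw [← Ioo_union_Ici_eq_Ioi one_pos, integrableOn_union, integrableOn_Ici_iff_integrableOn_Ioi]
  refine ⟨(integrableOn_congr_fun (fun r hr => ?_) measurableSet_Ioo).1
    (integrableOn_Ioo_rpow_mul_one_sub_rpow hp hq),
    (integrableOn_congr_fun (fun r hr => ?_) measurableSet_Ioi).1
    (integrableOn_Ioi_one_rpow_mul_sub_one_rpow hq hpq)⟩
  · rw [abs_of_neg (sub_neg.2 hr.2), neg_sub]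
  · rw [abs_of_pos (sub_pos.2 hr)]

lemma lintegral_inv_norm_pow_finrank_mul_comp_smul {E : Type*} [NormedAddCommGroup E]
    [NormedSpace ℝ E] [MeasurableSpace E] [BorelSpace E] [FiniteDimensional ℝ E]
    (μ : Measure E) [μ.IsAddHaarMeasure] {β : ℝ} (hβ : 0 < β) (F : E → ℝ≥0∞) :
    ∫⁻ u, ENNReal.ofReal (‖u‖ ^ Module.finrank ℝ E)⁻¹ * F (β • u) ∂μ =
      ∫⁻ u, ENNReal.ofReal (‖u‖ ^ Module.finrank ℝ E)⁻¹ * F u ∂μ := by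
  set d := Module.finrank ℝ E
  set G : E → ℝ≥0∞ := fun u => ENNReal.ofReal (‖u‖ ^ d)⁻¹ * F u
  have h_dilate (u : E) : ENNReal.ofReal (‖u‖ ^ d)⁻¹ * F (β • u)
      = ENNReal.ofReal (β ^ d) * G (β • u) := by
    simp only [G]
    rw [← mul_assoc, ← ENNReal.ofReal_mul (by positivity), norm_smul, Real.norm_of_nonneg hβ.le,
      mul_pow, mul_inv, mul_inv_cancel_left₀ (by positivity)]
  have h_equiv := lintegral_map_equiv (μ := μ) G
    (Homeomorph.smulOfNeZero β hβ.ne').toMeasurableEquiv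
  simp only [Homeomorph.toMeasurableEquiv_coe, Homeomorph.smulOfNeZero_apply] at h_equiv
  simp only [h_dilate]
  rw [lintegral_const_mul' _ _ ENNReal.ofReal_ne_top, ← h_equiv]
  change _ * ∫⁻ u, G u ∂(μ.map (β • ·)) = _
  rw [Measure.map_addHaar_smul μ hβ.ne', lintegral_smul_measure, smul_eq_mul, ← mul_assoc,
    ← ENNReal.ofReal_mul (by positivity), abs_of_pos (by positivity),
    mul_inv_cancel₀ (by positivity), ENNReal.ofReal_one, one_mul]

lemma lintegral_inv_normSq_mul_rpow_lt_top {δ : ℝ} (hδ : 0 < δ) (hδ' : δ < 1 / 2) :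
    ∫⁻ u : ℂ, ENNReal.ofReal (‖u‖ ^ 2)⁻¹ *
      ENNReal.ofReal ((4 * ‖u‖ / (‖u‖ - 1) ^ 2) ^ δ) < ⊤ := by
  have h_radial : IntegrableOn
      (fun r : ℝ => r ^ 1 • ((r ^ 2)⁻¹ * (4 * r / (r - 1) ^ 2) ^ δ)) (Ioi 0) := by
    refine (integrableOn_congr_fun (fun r hr => ?_) measurableSet_Ioi).1
      ((integrableOn_Ioi_rpow_mul_abs_sub_one_rpow (p := δ - 1) (q := -(2 * δ)) (by linarith)
        (by linarith) (by linarith)).const_mul (4 ^ δ))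
    have hr0 : 0 < r := hr
    have h_sq : ((r - 1) ^ 2) ^ δ = |r - 1| ^ (2 * δ) := by
      rw [← sq_abs, Real.rpow_mul (abs_nonneg _), Real.rpow_two]
    rw [Real.div_rpow (by positivity) (by positivity), h_sq, Real.rpow_neg (abs_nonneg _),
      Real.mul_rpow (by norm_num) hr0.le, Real.rpow_sub_one hr0.ne', smul_eq_mul]
    field_simp
  have h_int : Integrable fun u : ℂ => (‖u‖ ^ 2)⁻¹ * (4 * ‖u‖ / (‖u‖ - 1) ^ 2) ^ δ := by
    refine (integrable_fun_norm_addHaar (volume : Measure ℂ)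
      (f := fun r => (r ^ 2)⁻¹ * (4 * r / (r - 1) ^ 2) ^ δ)).2 ?_
    simpa only [Complex.finrank_real_complex] using h_radial
  refine lt_of_eq_of_lt (lintegral_congr fun u => ?_) h_int.lintegral_lt_top
  exact (ENNReal.ofReal_mul (by positivity)).symm

end RadialIntegrals

section GreenFunction

/-- The Green function `g(z, a) = log |(1 - ā z) / (z - a)|` of the disc, with the junk value
`g(a, a) = 0` at its pole. -/
def greenFn (a z : ℂ) : ℝ := Real.log ‖(1 - (starRingEnd ℂ) a * z) / (z - a)‖

variable {a z : ℂ}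

lemma norm_sq_one_sub_conj_mul (a z : ℂ) : ‖1 - (starRingEnd ℂ) a * z‖ ^ 2
    = ‖z - a‖ ^ 2 + (1 - ‖a‖ ^ 2) * (1 - ‖z‖ ^ 2) := by
  simp only [← Complex.normSq_eq_norm_sq, Complex.normSq_apply, Complex.sub_re, Complex.sub_im,
    Complex.mul_re, Complex.mul_im, Complex.conj_re, Complex.conj_im, Complex.one_re,
    Complex.one_im]
  ring

lemma greenFn_eq_half_log (hza : z ≠ a) :
    greenFn a z = 1 / 2 * Real.log (1 + (1 - ‖a‖ ^ 2) * (1 - ‖z‖ ^ 2) / ‖z - a‖ ^ 2) := by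
  have h_pos : 0 < ‖z - a‖ := norm_pos_iff.2 (sub_ne_zero.2 hza)
  have h_sq : ‖(1 - (starRingEnd ℂ) a * z) / (z - a)‖ ^ 2
      = 1 + (1 - ‖a‖ ^ 2) * (1 - ‖z‖ ^ 2) / ‖z - a‖ ^ 2 := by
    rw [norm_div, div_pow, norm_sq_one_sub_conj_mul]
    field_simp
  rw [← h_sq, Real.log_pow, greenFn]
  push_cast; ring

lemma one_sub_norm_sq_pos (hz : ‖z‖ < 1) : 0 < 1 - ‖z‖ ^ 2 := by
  nlinarith [norm_nonneg z]

lemma one_sub_norm_sq_le (hz : ‖z‖ < 1) : 1 - ‖z‖ ^ 2 ≤ 2 * ‖1 - z‖ := by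
  have h : 1 - ‖z‖ ≤ ‖1 - z‖ := by simpa using norm_sub_norm_le 1 z
  nlinarith [norm_nonneg z, norm_nonneg (1 - z)]

lemma greenFn_nonneg (ha : ‖a‖ < 1) (hz : ‖z‖ < 1) : 0 ≤ greenFn a z := by
  obtain rfl | hza := eq_or_ne z a
  · simp only [greenFn, sub_self, _root_.div_zero, norm_zero, Real.log_zero, le_refl]
  · have ha' := one_sub_norm_sq_pos ha
    have hz' := one_sub_norm_sq_pos hz
    rw [greenFn_eq_half_log hza]
    exact mul_nonneg (by norm_num) (Real.log_nonneg (le_add_of_nonneg_right (by positivity)))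

lemma greenFn_le_half_log (ha : ‖a‖ < 1) (hz : ‖z‖ < 1) (hne : ‖1 - z‖ ≠ ‖1 - a‖) :
    greenFn a z ≤
      1 / 2 * Real.log (1 + 4 * (‖1 - z‖ / ‖1 - a‖) / (‖1 - z‖ / ‖1 - a‖ - 1) ^ 2) := by
  have ha1 := norm_one_sub_pos ha
  have h_sub : ‖1 - z‖ - ‖1 - a‖ ≠ 0 := sub_ne_zero.2 hne
  have h_ratio : 4 * (‖1 - z‖ / ‖1 - a‖) / (‖1 - z‖ / ‖1 - a‖ - 1) ^ 2
      = (2 * ‖1 - a‖) * (2 * ‖1 - z‖) / (‖1 - z‖ - ‖1 - a‖) ^ 2 := by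
    rw [div_sub_one ha1.ne']
    field_simp
    ring
  have h_num : (1 - ‖a‖ ^ 2) * (1 - ‖z‖ ^ 2) ≤ (2 * ‖1 - a‖) * (2 * ‖1 - z‖) :=
    mul_le_mul (one_sub_norm_sq_le ha) (one_sub_norm_sq_le hz) (one_sub_norm_sq_pos hz).le
      (by positivity)
  have h_den : (‖1 - z‖ - ‖1 - a‖) ^ 2 ≤ ‖z - a‖ ^ 2 := by
    have h := abs_norm_sub_norm_le (1 - z) (1 - a)
    rw [_root_.sub_sub_sub_cancel_left, norm_sub_rev a] at h
    exact sq_le_sq.2 (h.trans (le_abs_self _))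
  have ha' := one_sub_norm_sq_pos ha
  have hz' := one_sub_norm_sq_pos hz
  rw [greenFn_eq_half_log fun h => hne (by rw [h]), h_ratio]
  gcongr

lemma one_le_greenFn (hza : z ≠ a) (h : 4 * ‖z - a‖ ≤ 1 - ‖a‖) :
    1 ≤ greenFn a z := by
  have h_pos : 0 < ‖z - a‖ := norm_pos_iff.2 (sub_ne_zero.2 hza)
  have hz : ‖z‖ ≤ 1 := by linarith [norm_le_insert' z a]
  have h_num : 1 - ‖a‖ ≤ ‖1 - (starRingEnd ℂ) a * z‖ := by
    have h_rev := norm_sub_norm_le 1 ((starRingEnd ℂ) a * z)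
    rw [norm_one, norm_mul, RCLike.norm_conj] at h_rev
    linarith [mul_le_of_le_one_right (norm_nonneg a) hz]
  have h_four : 4 ≤ ‖(1 - (starRingEnd ℂ) a * z) / (z - a)‖ := by
    rw [norm_div, le_div_iff₀ h_pos]
    exact h.trans h_num
  rw [greenFn, Real.le_log_iff_exp_le (by linarith)]
  linarith [Real.exp_one_lt_d9]

lemma greenFn_rpow_le {s ε : ℝ} (hs : 0 < s) (hε : 0 < ε) (hε1 : ε ≤ 1) (ha : ‖a‖ < 1)
    (hz : ‖z‖ < 1) (hne : ‖1 - z‖ ≠ ‖1 - a‖) :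
    greenFn a z ^ s ≤ (1 / (2 * ε)) ^ s *
      (4 * (‖1 - z‖ / ‖1 - a‖) / (‖1 - z‖ / ‖1 - a‖ - 1) ^ 2) ^ (ε * s) := by
  set y := 4 * (‖1 - z‖ / ‖1 - a‖) / (‖1 - z‖ / ‖1 - a‖ - 1) ^ 2
  have hy : 0 ≤ y := by positivity
  have h_le : greenFn a z ≤ 1 / (2 * ε) * y ^ ε := by
    calc greenFn a z ≤ 1 / 2 * Real.log (1 + y) := greenFn_le_half_log ha hz hne
      _ ≤ 1 / 2 * (y ^ ε / ε) := by gcongr; exact log_one_add_le_rpow_div hy hε hε1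
      _ = 1 / (2 * ε) * y ^ ε := by ring
  rw [Real.rpow_mul hy, ← Real.mul_rpow (by positivity) (by positivity)]
  exact Real.rpow_le_rpow (greenFn_nonneg ha hz) h_le hs.le

lemma ae_ofReal_greenFn_rpow_div_le {s ε : ℝ} (hs : 0 < s) (hε : 0 < ε) (hε1 : ε ≤ 1)
    (ha : ‖a‖ < 1) : ∀ᵐ z ∂volume.restrict (ball (0 : ℂ) 1),
      ENNReal.ofReal (greenFn a z ^ s / ‖1 - z‖ ^ 2) ≤
        ENNReal.ofReal ((1 / (2 * ε)) ^ s) * (ENNReal.ofReal (‖1 - z‖ ^ 2)⁻¹ *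
          ENNReal.ofReal ((4 * ‖‖1 - a‖⁻¹ • (1 - z)‖ /
            (‖‖1 - a‖⁻¹ • (1 - z)‖ - 1) ^ 2) ^ (ε * s))) := by
  filter_upwards [self_mem_ae_restrict measurableSet_ball, ae_restrict_of_ae
    (measure_eq_zero_iff_ae_notMem.1 (Measure.addHaar_sphere volume 1 ‖1 - a‖))] with z hz hz_ne
  rw [mem_sphere, dist_eq_norm, norm_sub_rev] at hz_ne
  rw [← ENNReal.ofReal_mul (by positivity), ← ENNReal.ofReal_mul (by positivity), norm_smul,
    Real.norm_of_nonneg (by positivity), inv_mul_eq_div ‖1 - a‖]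
  refine ENNReal.ofReal_le_ofReal ?_
  rw [mul_left_comm, div_eq_inv_mul]
  exact mul_le_mul_of_nonneg_left
    (greenFn_rpow_le hs hε hε1 ha (mem_ball_zero_iff.1 hz) hz_ne)
    (inv_nonneg.2 (sq_nonneg ‖1 - z‖))

/-- Bounding `g(z, a)` in terms of `‖1 - z‖ / ‖1 - a‖` alone turns the integral into a radial one
about `1`, which by the scale invariance of `‖u‖⁻² du` does not depend on `a`. -/
lemma exists_lintegral_greenFn_rpow_div_le {s : ℝ} (hs : 0 < s) :
    ∃ K : ℝ, 0 ≤ K ∧ ∀ a ∈ ball (0 : ℂ) 1,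
      ∫⁻ z in ball (0 : ℂ) 1, ENNReal.ofReal (greenFn a z ^ s / ‖1 - z‖ ^ 2) ≤
        ENNReal.ofReal K := by
  obtain ⟨ε, hε, hε1, hδ⟩ : ∃ ε : ℝ, 0 < ε ∧ ε ≤ 1 ∧ ε * s < 1 / 2 := by
    refine ⟨min 1 (1 / (4 * s)), by positivity, min_le_left _ _, ?_⟩
    calc min 1 (1 / (4 * s)) * s ≤ 1 / (4 * s) * s := by gcongr; exact min_le_right _ _
      _ < 1 / 2 := by field_simp; norm_num
  set c : ℝ := (1 / (2 * ε)) ^ s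
  set F : ℂ → ℝ≥0∞ := fun u => ENNReal.ofReal ((4 * ‖u‖ / (‖u‖ - 1) ^ 2) ^ (ε * s))
  have h_fin : ENNReal.ofReal c * ∫⁻ u : ℂ, ENNReal.ofReal (‖u‖ ^ 2)⁻¹ * F u ≠ ⊤ :=
    ENNReal.mul_ne_top ENNReal.ofReal_ne_top
      (lintegral_inv_normSq_mul_rpow_lt_top (by positivity) hδ).ne
  refine ⟨_, ENNReal.toReal_nonneg, fun a ha =>
    le_of_le_of_eq ?_ (ENNReal.ofReal_toReal h_fin).symm⟩
  rw [mem_ball_zero_iff] at ha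
  have hβ := norm_one_sub_pos ha
  calc ∫⁻ z in ball (0 : ℂ) 1, ENNReal.ofReal (greenFn a z ^ s / ‖1 - z‖ ^ 2)
      ≤ ∫⁻ z : ℂ,
          ENNReal.ofReal c * (ENNReal.ofReal (‖1 - z‖ ^ 2)⁻¹ * F (‖1 - a‖⁻¹ • (1 - z))) :=
        (lintegral_mono_ae (ae_ofReal_greenFn_rpow_div_le hs hε hε1 ha)).trans
          (setLIntegral_le_lintegral _ _)
    _ = ENNReal.ofReal c * ∫⁻ u : ℂ, ENNReal.ofReal (‖u‖ ^ 2)⁻¹ * F (‖1 - a‖⁻¹ • u) := by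
        rw [lintegral_const_mul' _ _ ENNReal.ofReal_ne_top]
        congr 1
        exact lintegral_sub_left_eq_self
          (fun u : ℂ => ENNReal.ofReal (‖u‖ ^ 2)⁻¹ * F (‖1 - a‖⁻¹ • u)) 1
    _ = ENNReal.ofReal c * ∫⁻ u : ℂ, ENNReal.ofReal (‖u‖ ^ 2)⁻¹ * F u := by
        congr 1
        simpa only [Complex.finrank_real_complex] using
          lintegral_inv_norm_pow_finrank_mul_comp_smul (volume : Measure ℂ) (inv_pos.2 hβ) F

end GreenFunction

section SubmeanValue

lemma lintegral_lintegral_circleMap_mul {G : ℂ → ℝ≥0∞} (hG : Measurable G) :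
    ∫⁻ z, ∫⁻ θ in Ioc 0 (2 * Real.pi), G (circleMap 0 1 θ * z) =
      ENNReal.ofReal (2 * Real.pi) * ∫⁻ z, G z := by
  have h_rot : ∀ θ : ℝ, ∫⁻ z, G (circleMap 0 1 θ * z) = ∫⁻ z, G z := by
    intro θ
    have h_exp : circleMap 0 1 θ = Circle.exp θ := by simp [circleMap, Circle.coe_exp]
    simpa only [rotation_apply, ← h_exp] using
      (rotation (Circle.exp θ)).measurePreserving.lintegral_comp hG
  rw [lintegral_lintegral_swap (by fun_prop)]
  simp only [h_rot, setLIntegral_const, Real.volume_Ioc, _root_.sub_zero]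
  rw [mul_comm]

variable {E : Type*} [NormedAddCommGroup E] [NormedSpace ℂ E] [CompleteSpace E]

lemma enorm_le_lintegral_circleMap {h : ℂ → E} {c : ℂ} {R : ℝ}
    (hh : DiffContOnCl ℂ h (ball c |R|)) :
    ENNReal.ofReal (2 * Real.pi) * ‖h c‖ₑ ≤
      ∫⁻ θ in Ioc 0 (2 * Real.pi), ‖h (circleMap c R θ)‖ₑ := by
  have h_mean := hh.circleAverage
  rw [Real.circleAverage_def, intervalIntegral.integral_of_le Real.two_pi_pos.le,
    inv_smul_eq_iff₀ Real.two_pi_pos.ne'] at h_mean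
  calc ENNReal.ofReal (2 * Real.pi) * ‖h c‖ₑ
      = ‖∫ θ in Ioc 0 (2 * Real.pi), h (circleMap c R θ)‖ₑ := by
        rw [h_mean, enorm_smul, Real.enorm_of_nonneg Real.two_pi_pos.le]
    _ ≤ _ := enorm_integral_le_lintegral_enorm _

lemma enorm_le_lintegral_add_circleMap_mul {h : ℂ → E} {a z : ℂ} {R : ℝ}
    (hh : DifferentiableOn ℂ h (ball a R)) (hz : ‖z‖ < R) :
    ENNReal.ofReal (2 * Real.pi) * ‖h a‖ₑ ≤
      ∫⁻ θ in Ioc 0 (2 * Real.pi), ‖h (a + circleMap 0 1 θ * z)‖ₑ := by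
  have h_maps : MapsTo (fun w : ℂ => a + w * z) (closedBall 0 1) (ball a R) := by
    intro w hw
    rw [mem_ball_iff_norm, add_sub_cancel_left, norm_mul]
    exact (mul_le_of_le_one_left (norm_nonneg z) (mem_closedBall_zero_iff.1 hw)).trans_lt hz
  have h_diff : DiffContOnCl ℂ (fun w => h (a + w * z)) (ball 0 |1|) := by
    rw [abs_one]
    refine DifferentiableOn.diffContOnCl ?_
    rw [closure_ball _ one_ne_zero]
    exact hh.comp (by fun_prop) h_maps
  simpa only [zero_mul, add_zero] using enorm_le_lintegral_circleMap h_diff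

/-- Averaging the area integral over rotations about `a` turns it into circle means. -/
lemma volume_ball_mul_enorm_le_setLIntegral {h : ℂ → E} {a : ℂ} {R : ℝ}
    (hh : DifferentiableOn ℂ h (ball a R)) :
    volume (ball a R) * ‖h a‖ₑ ≤ ∫⁻ z in ball a R, ‖h z‖ₑ := by
  classical
  set G : ℂ → ℝ≥0∞ := (ball a R).piecewise (fun z => ‖h z‖ₑ) 0 with hG
  have hG_meas : Measurable G :=
    hh.continuousOn.enorm.measurable_piecewise continuousOn_const measurableSet_ball
  have h_ball : ∫⁻ z in ball a R, ‖h z‖ₑ = ∫⁻ z, G (a + z) := by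
    rw [lintegral_add_left_eq_self G a, ← lintegral_indicator measurableSet_ball,
      ← piecewise_eq_indicator]
  have h_circle : ∀ z ∈ ball (0 : ℂ) R, ENNReal.ofReal (2 * Real.pi) * ‖h a‖ₑ ≤
      ∫⁻ θ in Ioc 0 (2 * Real.pi), G (a + circleMap 0 1 θ * z) := by
    intro z hz
    rw [mem_ball_zero_iff] at hz
    refine (enorm_le_lintegral_add_circleMap_mul hh hz).trans_eq (lintegral_congr fun θ => ?_)
    rw [hG, piecewise_eq_of_mem]
    simpa [mem_ball_iff_norm] using hz
  have h_two_pi : ENNReal.ofReal (2 * Real.pi) ≠ 0 := by simp [Real.pi_pos]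
  rw [← ENNReal.mul_le_mul_iff_right h_two_pi ENNReal.ofReal_ne_top, h_ball]
  calc ENNReal.ofReal (2 * Real.pi) * (volume (ball a R) * ‖h a‖ₑ)
      = ∫⁻ _ in ball (0 : ℂ) R, ENNReal.ofReal (2 * Real.pi) * ‖h a‖ₑ := by
        rw [setLIntegral_const, Measure.addHaar_ball_center volume a]
        ring
    _ ≤ ∫⁻ z, ∫⁻ θ in Ioc 0 (2 * Real.pi), G (a + circleMap 0 1 θ * z) :=
        (setLIntegral_mono' measurableSet_ball h_circle).trans (setLIntegral_le_lintegral _ _)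
    _ = ENNReal.ofReal (2 * Real.pi) * ∫⁻ z, G (a + z) :=
        lintegral_lintegral_circleMap_mul (G := fun z => G (a + z)) (by fun_prop)

end SubmeanValue

section QsSpace

variable {s : ℝ} {f : ℂ → ℂ} {a : ℂ}

/-- The seminorm `ρ_{Q_s}`; its value on functions outside `Q_s` is meaningless, since `toReal`
sends `∞` to `0`. -/
def qsSeminorm (s : ℝ) (f : ℂ → ℂ) : ℝ := √(⨆ a ∈ ball (0 : ℂ) 1, qsInt s f a).toReal

lemma qsSeminorm_nonneg : 0 ≤ qsSeminorm s f := Real.sqrt_nonneg _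

lemma qsNorm_eq_add_qsSeminorm : qsNorm s f = ‖f 0‖ + qsSeminorm s f := rfl

lemma MemQs.qsInt_le (hf : MemQs s f) (ha : ‖a‖ < 1) :
    qsInt s f a ≤ ENNReal.ofReal (qsSeminorm s f ^ 2) := by
  rw [qsSeminorm, Real.sq_sqrt ENNReal.toReal_nonneg, ENNReal.ofReal_toReal hf.2.ne]
  exact le_iSup₂_of_le a (mem_ball_zero_iff.2 ha) le_rfl

/-- The Green function is at least `1` on the disc of radius `(1 - |a|)/4` about `a`, where the
submean value property applies to `(f')²`. -/
lemma ofReal_sq_mul_norm_deriv_le_qsInt (hs : 0 ≤ s) (hf : DifferentiableOn ℂ f (ball 0 1))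
    (ha : ‖a‖ < 1) :
    ENNReal.ofReal (((1 - ‖a‖) / 4 * ‖deriv f a‖) ^ 2) ≤ qsInt s f a := by
  set R := (1 - ‖a‖) / 4 with hR
  have hR_pos : 0 < R := by linarith
  have h_sub : ball a R ⊆ ball 0 1 := ball_subset_ball' (by rw [dist_zero_right]; linarith)
  have h_submean := volume_ball_mul_enorm_le_setLIntegral (h := fun z => deriv f z ^ 2)
    (((hf.deriv isOpen_ball).mono h_sub).pow 2)
  have h_green : ∀ᵐ z ∂volume.restrict (ball a R),
      ‖deriv f z ^ 2‖ₑ ≤ ENNReal.ofReal (‖deriv f z‖ ^ 2 * greenFn a z ^ s) := by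
    filter_upwards [self_mem_ae_restrict measurableSet_ball,
      ae_restrict_of_ae (measure_eq_zero_iff_ae_notMem.1 (measure_singleton a))] with z hz hza
    rw [← ofReal_norm, norm_pow]
    refine ENNReal.ofReal_le_ofReal (le_mul_of_one_le_right (sq_nonneg _) ?_)
    exact Real.one_le_rpow
      (one_le_greenFn hza (by rw [mem_ball_iff_norm] at hz; linarith)) hs
  have h_pi : ENNReal.ofReal Real.pi ≠ 0 := by simp [Real.pi_pos]
  rw [qsInt, ← ENNReal.mul_le_iff_le_inv h_pi ENNReal.ofReal_ne_top]
  calc ENNReal.ofReal Real.pi * ENNReal.ofReal ((R * ‖deriv f a‖) ^ 2)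
      = volume (ball a R) * ‖deriv f a ^ 2‖ₑ := by
        rw [Complex.volume_ball, ← ofReal_norm, norm_pow, mul_pow, ENNReal.ofReal_mul (sq_nonneg R),
          ENNReal.ofReal_pow hR_pos.le, ← ENNReal.ofReal_coe_nnreal, NNReal.coe_real_pi]
        ring
    _ ≤ ∫⁻ z in ball a R, ‖deriv f z ^ 2‖ₑ := h_submean
    _ ≤ ∫⁻ z in ball a R, ENNReal.ofReal (‖deriv f z‖ ^ 2 * greenFn a z ^ s) :=
        lintegral_mono_ae h_green
    _ ≤ _ := lintegral_mono_set h_sub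

lemma MemQs.one_sub_norm_mul_norm_deriv_le (hs : 0 ≤ s) (hf : MemQs s f) (ha : ‖a‖ < 1) :
    (1 - ‖a‖) * ‖deriv f a‖ ≤ 4 * qsSeminorm s f := by
  have h_le := (ofReal_sq_mul_norm_deriv_le_qsInt hs hf.1 ha).trans (hf.qsInt_le ha)
  rw [ENNReal.ofReal_le_ofReal_iff (sq_nonneg _)] at h_le
  linarith [le_of_sq_le_sq h_le qsSeminorm_nonneg]

lemma hasDerivAt_comp_ofReal_mul (hf : DifferentiableOn ℂ f (ball 0 1)) {z : ℂ} (hz : ‖z‖ < 1)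
    {x : ℝ} (hx : x ∈ Icc 0 1) :
    HasDerivAt (fun x : ℝ => f (x * z)) (deriv f (x * z) * z) x := by
  have h_mem : (x : ℂ) * z ∈ ball (0 : ℂ) 1 := by
    rw [mem_ball_zero_iff, norm_mul, Complex.norm_of_nonneg hx.1]
    exact (mul_le_of_le_one_left (norm_nonneg z) hx.2).trans_lt hz
  have h_inner : HasDerivAt (fun w : ℂ => w * z) z (x : ℂ) := by
    simpa using (hasDerivAt_id' (x : ℂ)).mul_const z
  exact ((hf.differentiableAt (isOpen_ball.mem_nhds h_mem)).hasDerivAt.comp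
    (x : ℂ) h_inner).comp_ofReal

lemma norm_le_sub_mul_log_of_norm_deriv_le (hf : DifferentiableOn ℂ f (ball 0 1)) {T : ℝ}
    (hT : ∀ z : ℂ, ‖z‖ < 1 → (1 - ‖z‖) * ‖deriv f z‖ ≤ T) {z : ℂ} (hz : ‖z‖ < 1) :
    ‖f z‖ ≤ ‖f 0‖ - T * Real.log (1 - ‖z‖) := by
  have h_pos : ∀ x ∈ Icc (0 : ℝ) 1, 0 < 1 - x * ‖z‖ := fun x hx => by
    linarith [mul_le_of_le_one_left (norm_nonneg z) hx.2]
  have h_norm : ∀ x ∈ Icc (0 : ℝ) 1, ‖(x : ℂ) * z‖ = x * ‖z‖ := fun x hx => by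
    rw [norm_mul, Complex.norm_of_nonneg hx.1]
  have h_major : ∀ x ∈ Icc (0 : ℝ) 1,
      HasDerivAt (fun x : ℝ => ‖f 0‖ - T * Real.log (1 - x * ‖z‖)) (T * ‖z‖ / (1 - x * ‖z‖)) x := by
    intro x hx
    exact (((((hasDerivAt_id' x).mul_const ‖z‖).const_sub 1).log
      (h_pos x hx).ne').const_mul T).const_sub ‖f 0‖ |>.congr_deriv (by ring)
  have h_curve := fun x (hx : x ∈ Icc (0 : ℝ) 1) => hasDerivAt_comp_ofReal_mul hf hz hx
  have h_le := image_norm_le_of_norm_deriv_right_le_deriv_boundary'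
    (fun x hx => (h_curve x hx).continuousAt.continuousWithinAt)
    (fun x hx => (h_curve x (Ico_subset_Icc_self hx)).hasDerivWithinAt)
    (B := fun x : ℝ => ‖f 0‖ - T * Real.log (1 - x * ‖z‖)) (by simp)
    (fun x hx => (h_major x hx).continuousAt.continuousWithinAt)
    (fun x hx => (h_major x (Ico_subset_Icc_self hx)).hasDerivWithinAt)
    (fun x hx => ?_) (right_mem_Icc.2 zero_le_one)
  · simpa using h_le
  · have hx' := Ico_subset_Icc_self hx
    have h_deriv := hT (x * z) (by rw [h_norm x hx']; linarith [h_pos x hx'])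
    rw [h_norm x hx', mul_comm, ← le_div_iff₀ (h_pos x hx')] at h_deriv
    rw [norm_mul, mul_div_right_comm]
    gcongr

lemma MemQs.norm_le_logWeight (hs : 0 ≤ s) (hf : MemQs s f) {z : ℂ} (hz : ‖z‖ < 1) :
    ‖f z‖ ≤ 4 * qsNorm s f * logWeight ‖z‖ := by
  have h_growth := norm_le_sub_mul_log_of_norm_deriv_le hf.1
    (fun a ha => hf.one_sub_norm_mul_norm_deriv_le hs ha) hz
  have h_log : Real.log (1 - ‖z‖) ≤ 0 :=
    Real.log_nonpos (by linarith) (by linarith [norm_nonneg z])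
  have h_two : 1 / 2 ≤ Real.log 2 := by linarith [Real.log_two_gt_d9]
  have h_weight := logWeight_eq_sub hz
  have h_ge : 1 / 4 ≤ logWeight ‖z‖ := by linarith
  have hρ : 0 ≤ qsSeminorm s f := qsSeminorm_nonneg
  rw [qsNorm_eq_add_qsSeminorm]
  nlinarith [norm_nonneg (f 0), mul_nonneg (norm_nonneg (f 0)) (sub_nonneg.2 h_ge)]

lemma qsInt_le_of_norm_deriv_le {M : ℝ} (hf : ∀ z : ℂ, ‖z‖ < 1 → ‖deriv f z‖ ≤ M / ‖1 - z‖)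
    (ha : ‖a‖ < 1) :
    qsInt s f a ≤ (ENNReal.ofReal Real.pi)⁻¹ * (ENNReal.ofReal (M ^ 2) *
      ∫⁻ z in ball (0 : ℂ) 1, ENNReal.ofReal (greenFn a z ^ s / ‖1 - z‖ ^ 2)) := by
  rw [qsInt, ← lintegral_const_mul' _ _ ENNReal.ofReal_ne_top]
  gcongr _ * ?_
  refine setLIntegral_mono' measurableSet_ball fun z hz => ?_
  rw [mem_ball_zero_iff] at hz
  rw [← ENNReal.ofReal_mul (sq_nonneg M)]
  refine ENNReal.ofReal_le_ofReal ?_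
  calc ‖deriv f z‖ ^ 2 * greenFn a z ^ s ≤ (M / ‖1 - z‖) ^ 2 * greenFn a z ^ s := by
        have h_green := Real.rpow_nonneg (greenFn_nonneg ha hz) s
        gcongr
        exact hf z hz
    _ = M ^ 2 * (greenFn a z ^ s / ‖1 - z‖ ^ 2) := by ring

/-- Replaces the inclusion of the mean Lipschitz space `Λ²_{1/2}` in `Q_s`. -/
lemma exists_memQs_and_qsSeminorm_le (hs : 0 < s) :
    ∃ K > 0, ∀ (f : ℂ → ℂ) (M : ℝ), DifferentiableOn ℂ f (ball 0 1) →
      (∀ z : ℂ, ‖z‖ < 1 → ‖deriv f z‖ ≤ M / ‖1 - z‖) → MemQs s f ∧ qsSeminorm s f ≤ K * M := by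
  obtain ⟨K, hK, h_green⟩ := exists_lintegral_greenFn_rpow_div_le hs
  refine ⟨√(K / Real.pi) + 1, by positivity, fun f M hf hM => ?_⟩
  have hM_nonneg : 0 ≤ M := by simpa using (norm_nonneg _).trans (hM 0 (by simp))
  have h_sup : ⨆ a ∈ ball (0 : ℂ) 1, qsInt s f a ≤ ENNReal.ofReal (M ^ 2 * (K / Real.pi)) := by
    refine iSup₂_le fun a ha => ?_
    calc qsInt s f a
        ≤ (ENNReal.ofReal Real.pi)⁻¹ * (ENNReal.ofReal (M ^ 2) * ENNReal.ofReal K) := by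
          refine (qsInt_le_of_norm_deriv_le hM (mem_ball_zero_iff.1 ha)).trans ?_
          gcongr
          exact h_green a ha
      _ = ENNReal.ofReal (M ^ 2 * (K / Real.pi)) := by
          rw [ENNReal.ofReal_mul (sq_nonneg M), ENNReal.ofReal_div_of_pos Real.pi_pos,
            ENNReal.div_eq_inv_mul]
          ring
  refine ⟨⟨hf, h_sup.trans_lt ENNReal.ofReal_lt_top⟩, ?_⟩
  calc qsSeminorm s f ≤ √(M ^ 2 * (K / Real.pi)) :=
        Real.sqrt_le_sqrt (ENNReal.toReal_le_of_le_ofReal (by positivity) h_sup)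
    _ = √(K / Real.pi) * M := by
        rw [Real.sqrt_mul (sq_nonneg M), Real.sqrt_sq hM_nonneg, mul_comm]
    _ ≤ (√(K / Real.pi) + 1) * M := by gcongr; linarith

variable {g : ℂ → ℂ}

lemma qsInt_congr (h : EqOn f g (ball 0 1)) : qsInt s f = qsInt s g := by
  funext a
  rw [qsInt, qsInt]
  congr 1
  refine setLIntegral_congr_fun measurableSet_ball fun z hz => ?_
  simp only [(h.eventuallyEq_of_mem (isOpen_ball.mem_nhds hz)).deriv_eq]

lemma MemQs.congr (hf : MemQs s f) (h : EqOn g f (ball 0 1)) : MemQs s g :=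
  ⟨hf.1.congr h, by rw [qsInt_congr h]; exact hf.2⟩

lemma qsNorm_congr (h : EqOn f g (ball 0 1)) : qsNorm s f = qsNorm s g := by
  rw [qsNorm, qsNorm, qsInt_congr h, h (mem_ball_self one_pos)]

end QsSpace

section TaylorCoefficients

lemma sum_range_sq_norm_le_of_norm_eval_le {c : ℕ → ℂ} {N : ℕ} {B : ℝ}
    (hB : ∀ w : ℂ, ‖w‖ = 1 → ‖∑ k ∈ Finset.range N, c k * w ^ k‖ ≤ B) :
    ∑ k ∈ Finset.range N, ‖c k‖ ^ 2 ≤ B ^ 2 := by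
  set p : Polynomial ℂ := ∑ k ∈ Finset.range N, Polynomial.monomial k (c k) with hp
  have h_coeff : ∀ k, p.coeff k = if k < N then c k else 0 := by
    intro k
    rw [hp, Polynomial.finsetSum_coeff]
    simp [Polynomial.coeff_monomial]
  have h_support : p.support ⊆ Finset.range N := by
    intro k hk
    rw [Polynomial.mem_support_iff, h_coeff] at hk
    exact Finset.mem_range.2 (ite_ne_right_iff.1 hk).1
  have h_sum : ∑ k ∈ Finset.range N, ‖c k‖ ^ 2 = ∑ k ∈ p.support, ‖p.coeff k‖ ^ 2 := by
    rw [Finset.sum_subset h_support fun k _ hk => by simp [Polynomial.notMem_support_iff.1 hk]]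
    refine Finset.sum_congr rfl fun k hk => ?_
    rw [h_coeff, if_pos (Finset.mem_range.1 hk)]
  have h_eval : ∀ w, p.eval w = ∑ k ∈ Finset.range N, c k * w ^ k := by
    intro w
    simp only [hp, Polynomial.eval_finsetSum, Polynomial.eval_monomial]
  rw [h_sum, Polynomial.sum_sq_norm_coeff_eq_circleAverage]
  refine Real.circleAverage_mono_on_of_le_circle ?_ fun w hw => ?_
  · exact ContinuousOn.circleIntegrable' (by fun_prop)
  · rw [abs_one, mem_sphere_zero_iff_norm] at hw
    rw [h_eval]
    gcongr
    exact hB w hw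

lemma sum_range_sq_norm_le_of_norm_tsum_le {c : ℕ → ℂ} (hc : Summable fun k => ‖c k‖) {B : ℝ}
    (hB : ∀ w : ℂ, ‖w‖ = 1 → ‖∑' k, c k * w ^ k‖ ≤ B) (N : ℕ) :
    ∑ k ∈ Finset.range N, ‖c k‖ ^ 2 ≤ B ^ 2 := by
  have h_lim : Filter.Tendsto (fun M : ℕ => (B + ∑' k, ‖c (k + M)‖) ^ 2)
      Filter.atTop (nhds (B ^ 2)) := by
    simpa using ((tendsto_sum_nat_add fun k => ‖c k‖).const_add B).pow 2
  refine ge_of_tendsto h_lim ?_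
  filter_upwards [Filter.eventually_ge_atTop N] with M hM
  refine (Finset.sum_le_sum_of_subset_of_nonneg (Finset.range_mono hM)
    fun _ _ _ => sq_nonneg _).trans (sum_range_sq_norm_le_of_norm_eval_le fun w hw => ?_)
  have h_term : ∀ k, ‖c k * w ^ k‖ = ‖c k‖ := fun k => by
    rw [norm_mul, norm_pow, hw, one_pow, mul_one]
  have h_summable : Summable fun k => c k * w ^ k := Summable.of_norm (by simpa only [h_term])
  rw [eq_sub_of_add_eq (h_summable.sum_add_tsum_nat_add M)]
  refine (norm_sub_le _ _).trans (add_le_add (hB w hw) ?_)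
  refine (norm_tsum_le_tsum_norm ?_).trans_eq (by simp only [h_term])
  simpa only [h_term] using (summable_nat_add_iff M).2 hc

variable {f : ℂ → ℂ}

lemma hasSum_tc_mul_pow (hf : DifferentiableOn ℂ f (ball 0 1)) {z : ℂ} (hz : ‖z‖ < 1) :
    HasSum (fun k => tc f k * z ^ k) (f z) := by
  refine (Complex.hasSum_taylorSeries_on_ball hf (mem_ball_zero_iff.2 hz)).congr_fun fun k => ?_
  simp only [tc, _root_.sub_zero, smul_eq_mul]
  ring

lemma sum_range_sq_norm_tc_mul_pow_le (hf : DifferentiableOn ℂ f (ball 0 1)) {r B : ℝ}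
    (hr : r ∈ Ico 0 1) (hB : ∀ z : ℂ, ‖z‖ = r → ‖f z‖ ≤ B) (N : ℕ) :
    ∑ k ∈ Finset.range N, (‖tc f k‖ * r ^ k) ^ 2 ≤ B ^ 2 := by
  have hr_norm : ‖(r : ℂ)‖ = r := Complex.norm_of_nonneg hr.1
  have h_norm : ∀ k, ‖tc f k * (r : ℂ) ^ k‖ = ‖tc f k‖ * r ^ k := fun k => by
    rw [norm_mul, norm_pow, hr_norm]
  simp only [← h_norm]
  refine sum_range_sq_norm_le_of_norm_tsum_le ?_ (fun w hw => ?_) N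
  · exact (hasSum_tc_mul_pow hf (hr_norm.trans_lt hr.2)).summable.norm
  · have hrw : ‖(r : ℂ) * w‖ = r := by rw [norm_mul, hr_norm, hw, mul_one]
    simp only [mul_assoc, ← mul_pow]
    rw [(hasSum_tc_mul_pow hf (hrw.trans_lt hr.2)).tsum_eq]
    exact hB _ hrw

lemma sum_range_pow_mul_norm_tc_le (hf : DifferentiableOn ℂ f (ball 0 1)) {t B : ℝ}
    (ht : t ∈ Ico 0 1) (hB : ∀ z : ℂ, ‖z‖ = √t → ‖f z‖ ≤ B) (N : ℕ) :
    ∑ k ∈ Finset.range N, t ^ k * ‖tc f k‖ ≤ B / √(1 - t) := by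
  have h_sqrt : √t ∈ Ico 0 1 := ⟨Real.sqrt_nonneg t, by
    rw [Real.sqrt_lt' one_pos, one_pow]; exact ht.2⟩
  have hB_nonneg : 0 ≤ B := (norm_nonneg _).trans
    (hB (√t : ℝ) (by rw [Complex.norm_of_nonneg h_sqrt.1]))
  have ht_pos : 0 < 1 - t := sub_pos.2 ht.2
  have h_pow : ∀ k : ℕ, √t ^ k * √t ^ k = t ^ k := fun k => by
    rw [← mul_pow, Real.mul_self_sqrt ht.1]
  refine le_of_sq_le_sq ?_ (by positivity)
  calc (∑ k ∈ Finset.range N, t ^ k * ‖tc f k‖) ^ 2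
      = (∑ k ∈ Finset.range N, √t ^ k * (‖tc f k‖ * √t ^ k)) ^ 2 := by
        congr 1
        exact Finset.sum_congr rfl fun k _ => by rw [← h_pow k]; ring
    _ ≤ (∑ k ∈ Finset.range N, (√t ^ k) ^ 2) *
          ∑ k ∈ Finset.range N, (‖tc f k‖ * √t ^ k) ^ 2 :=
        Finset.sum_mul_sq_le_sq_mul_sq _ _ _
    _ ≤ (1 - t)⁻¹ * B ^ 2 := by
        gcongr
        · simp only [sq, h_pow]
          rw [← tsum_geometric_of_lt_one ht.1 ht.2]
          exact (summable_geometric_of_lt_one ht.1 ht.2).sum_le_tsum _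
            fun k _ => pow_nonneg ht.1 k
        · exact sum_range_sq_norm_tc_mul_pow_le hf h_sqrt hB N
    _ = (B / √(1 - t)) ^ 2 := by rw [div_pow, Real.sq_sqrt ht_pos.le, inv_mul_eq_div]

end TaylorCoefficients

section CauchyIntegrals

variable {μ : Measure ℝ} {g : ℝ → ℂ} {z : ℂ}

lemma one_sub_norm_le_norm_one_sub_ofReal_mul {t : ℝ} (ht : t ∈ Icc 0 1) (z : ℂ) :
    1 - ‖z‖ ≤ ‖1 - t * z‖ := by
  calc 1 - ‖z‖ ≤ ‖(1 : ℂ)‖ - ‖t * z‖ := by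
        rw [norm_one, norm_mul, Complex.norm_of_nonneg ht.1]
        gcongr
        exact mul_le_of_le_one_left (norm_nonneg z) ht.2
    _ ≤ ‖1 - t * z‖ := norm_sub_norm_le _ _

lemma integrableOn_div_one_sub_mul (hg : IntegrableOn g (Ico 0 1) μ) (hz : ‖z‖ < 1) :
    IntegrableOn (fun t : ℝ => g t / (1 - t * z)) (Ico 0 1) μ := by
  simp only [div_eq_mul_inv]
  have hmeas : Measurable fun t : ℝ => (1 - t * z)⁻¹ := by fun_prop
  refine hg.mul_bdd (c := (1 - ‖z‖)⁻¹) hmeas.aestronglyMeasurable ?_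
  filter_upwards [self_mem_ae_restrict measurableSet_Ico] with t ht
  rw [norm_inv]
  exact inv_anti₀ (sub_pos.2 hz)
    (one_sub_norm_le_norm_one_sub_ofReal_mul (Ico_subset_Icc_self ht) z)

lemma norm_ofReal_mul_div_sq_le {t : ℝ} (ht : t ∈ Icc 0 1) (hz : ‖z‖ < 1) (w : ℂ) :
    ‖t * w / (1 - t * z) ^ 2‖ ≤ ‖w‖ / (1 - ‖z‖) ^ 2 := by
  rw [norm_div, norm_mul, norm_pow, Complex.norm_of_nonneg ht.1]
  have := sub_pos.2 hz
  gcongr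
  · exact mul_le_of_le_one_left (norm_nonneg w) ht.2
  · exact one_sub_norm_le_norm_one_sub_ofReal_mul ht z

lemma integrableOn_mul_div_one_sub_mul_sq (hg : IntegrableOn g (Ico 0 1) μ) (hz : ‖z‖ < 1) :
    IntegrableOn (fun t : ℝ => t * g t / (1 - t * z) ^ 2) (Ico 0 1) μ := by
  refine (hg.norm.div_const ((1 - ‖z‖) ^ 2)).mono' ?_ ?_
  · have hmeas : Measurable fun t : ℝ => ((1 - t * z) ^ 2)⁻¹ := by fun_prop
    exact (Complex.continuous_ofReal.aestronglyMeasurable.mul hg.1).mul hmeas.aestronglyMeasurable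
  · filter_upwards [self_mem_ae_restrict measurableSet_Ico] with t ht
    exact norm_ofReal_mul_div_sq_le (Ico_subset_Icc_self ht) hz (g t)

lemma hasDerivAt_integral_div_one_sub_mul (hg : IntegrableOn g (Ico 0 1) μ) (hz : ‖z‖ < 1) :
    HasDerivAt (fun w : ℂ => ∫ t in Ico (0 : ℝ) 1, g t / (1 - t * w) ∂μ)
      (∫ t in Ico (0 : ℝ) 1, t * g t / (1 - t * z) ^ 2 ∂μ) z := by
  obtain ⟨r, hzr, hr⟩ := exists_between hz
  have hball : ∀ w ∈ ball (0 : ℂ) r, ‖w‖ < 1 := fun w hw => (mem_ball_zero_iff.1 hw).trans hr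
  refine (hasDerivAt_integral_of_dominated_loc_of_deriv_le
    (F := fun w t => g t / (1 - t * w)) (F' := fun w t => t * g t / (1 - t * w) ^ 2)
    (bound := fun t => ‖g t‖ / (1 - r) ^ 2)
    (isOpen_ball.mem_nhds (mem_ball_zero_iff.2 hzr)) ?_ (integrableOn_div_one_sub_mul hg hz)
    (integrableOn_mul_div_one_sub_mul_sq hg hz).1 ?_ (hg.norm.div_const _) ?_).2
  · filter_upwards [isOpen_ball.mem_nhds (mem_ball_zero_iff.2 hzr)] with w hw
    exact (integrableOn_div_one_sub_mul hg (hball w hw)).1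
  · filter_upwards [self_mem_ae_restrict measurableSet_Ico] with t ht w hw
    refine (norm_ofReal_mul_div_sq_le (Ico_subset_Icc_self ht) (hball w hw) (g t)).trans ?_
    have := sub_pos.2 hr
    have h2 : ‖w‖ ≤ r := (mem_ball_zero_iff.1 hw).le
    gcongr
  · filter_upwards [self_mem_ae_restrict measurableSet_Ico] with t ht w hw
    have hne : 1 - t * w ≠ 0 := norm_pos_iff.1 <| (sub_pos.2 (hball w hw)).trans_le <|
      one_sub_norm_le_norm_one_sub_ofReal_mul (Ico_subset_Icc_self ht) w
    exact ((hasDerivAt_const w (g t)).div (((hasDerivAt_id' w).const_mul (t : ℂ)).const_sub 1)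
      hne).congr_deriv (by ring)

lemma norm_integral_pow_mul_le (hg : IntegrableOn g (Ico 0 1) μ) (n : ℕ) :
    ‖∫ t in Ico (0 : ℝ) 1, t ^ n * g t ∂μ‖ ≤ ∫ t in Ico (0 : ℝ) 1, ‖g t‖ ∂μ := by
  refine norm_integral_le_of_norm_le hg.norm ?_
  filter_upwards [self_mem_ae_restrict measurableSet_Ico] with t ht
  rw [norm_mul, norm_pow, Complex.norm_of_nonneg ht.1]
  exact mul_le_of_le_one_left (norm_nonneg _) (pow_le_one₀ ht.1 ht.2.le)

lemma summable_norm_integral_pow_mul (hg : IntegrableOn g (Ico 0 1) μ) (hz : ‖z‖ < 1) :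
    Summable fun n : ℕ => ‖(∫ t in Ico (0 : ℝ) 1, t ^ n * g t ∂μ) * z ^ n‖ := by
  refine ((summable_geometric_of_lt_one (norm_nonneg z) hz).mul_left
    (∫ t in Ico (0 : ℝ) 1, ‖g t‖ ∂μ)).of_nonneg_of_le (fun _ => norm_nonneg _) fun n => ?_
  rw [norm_mul, norm_pow]
  gcongr
  exact norm_integral_pow_mul_le hg n

lemma hasSum_integral_pow_mul (hg : IntegrableOn g (Ico 0 1) μ) (hz : ‖z‖ < 1) :
    HasSum (fun n : ℕ => (∫ t in Ico (0 : ℝ) 1, t ^ n * g t ∂μ) * z ^ n)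
      (∫ t in Ico (0 : ℝ) 1, g t / (1 - t * z) ∂μ) := by
  simp only [← integral_mul_const]
  have hgeom := summable_geometric_of_lt_one (norm_nonneg z) hz
  refine hasSum_integral_of_dominated_convergence (fun n t => ‖g t‖ * ‖z‖ ^ n) (fun n => ?_)
    (fun n => ?_) (.of_forall fun t => hgeom.mul_left ‖g t‖) ?_ ?_
  · have hpow : Continuous fun t : ℝ => (t : ℂ) ^ n := by fun_prop
    exact (hpow.aestronglyMeasurable.mul hg.1).mul_const _
  · filter_upwards [self_mem_ae_restrict measurableSet_Ico] with t ht
    rw [norm_mul, norm_mul, norm_pow, norm_pow, Complex.norm_of_nonneg ht.1]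
    gcongr
    exact mul_le_of_le_one_left (norm_nonneg _) (pow_le_one₀ ht.1 ht.2.le)
  · simp only [tsum_mul_left]
    exact hg.norm.mul_const _
  · filter_upwards [self_mem_ae_restrict measurableSet_Ico] with t ht
    have htz : ‖t * z‖ < 1 := by
      rw [norm_mul, Complex.norm_of_nonneg ht.1]
      exact (mul_le_of_le_one_left (norm_nonneg z) ht.2.le).trans_lt hz
    refine ((hasSum_geometric_of_norm_lt_one htz).mul_left (g t)).congr_fun fun n => ?_
    rw [mul_pow]
    ring

end CauchyIntegrals

section Hankel

lemma integrable_of_hasSum_of_summable_integral_norm {α E : Type*} [MeasurableSpace α]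
    [NormedAddCommGroup E] [CompleteSpace E] {ν : Measure α} {F : ℕ → α → E} {f : α → E}
    (hF : ∀ n, Integrable (F n) ν) (hsum : Summable fun n => ∫ a, ‖F n a‖ ∂ν)
    (hf : ∀ᵐ a ∂ν, HasSum (F · a) (f a)) : Integrable f ν := by
  refine ⟨aestronglyMeasurable_of_tendsto_ae Filter.atTop
    (fun N => Finset.aestronglyMeasurable_fun_sum (Finset.range N) fun n _ => (hF n).1)
    (hf.mono fun _ h => h.tendsto_sum_nat), ?_⟩
  calc ∫⁻ a, ‖f a‖ₑ ∂ν ≤ ∫⁻ a, ∑' n, ‖F n a‖ₑ ∂ν :=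
        lintegral_mono_ae <| hf.mono fun a h => h.tsum_eq ▸ enorm_tsum_le_tsum_enorm
    _ = ∑' n, ∫⁻ a, ‖F n a‖ₑ ∂ν := lintegral_tsum fun n => (hF n).1.enorm
    _ = ∑' n, ENNReal.ofReal (∫ a, ‖F n a‖ ∂ν) := by
        simp only [ofReal_integral_norm_eq_lintegral_enorm (hF _)]
    _ < ∞ := hsum.tsum_ofReal_lt_top

lemma mom_nonneg (μ : Measure ℝ) (n : ℕ) : 0 ≤ mom μ n :=
  setIntegral_nonneg measurableSet_Ico fun _ ht => pow_nonneg ht.1 n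

lemma norm_mom_mul (μ : Measure ℝ) (n : ℕ) (c : ℂ) : ‖mom μ n * c‖ = mom μ n * ‖c‖ := by
  rw [norm_mul, Complex.norm_of_nonneg (mom_nonneg μ n)]

lemma integral_ofReal_pow_mul (μ : Measure ℝ) (n : ℕ) (c : ℂ) :
    ∫ t in Ico (0 : ℝ) 1, (t : ℂ) ^ n * c ∂μ = mom μ n * c := by
  simp only [integral_mul_const, mom, ← Complex.ofReal_pow, integral_complex_ofReal]

lemma integral_norm_ofReal_pow_mul (μ : Measure ℝ) (n : ℕ) (c : ℂ) :
    ∫ t in Ico (0 : ℝ) 1, ‖(t : ℂ) ^ n * c‖ ∂μ = mom μ n * ‖c‖ := by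
  rw [mom, ← integral_mul_const]
  refine setIntegral_congr_fun measurableSet_Ico fun t ht => ?_
  simp only [norm_mul, norm_pow, Complex.norm_of_nonneg ht.1]

variable {μ : Measure ℝ} {f : ℂ → ℂ}

lemma HmuWD.summable_mom_mul_norm_tc (h : HmuWD μ f) :
    Summable fun k => mom μ k * ‖tc f k‖ := by
  simpa only [zero_add, norm_mom_mul] using h.1 0

lemma ae_hasSum_pow_mul_tc (hf : DifferentiableOn ℂ f (ball 0 1)) (n : ℕ) :
    ∀ᵐ t : ℝ ∂μ.restrict (Ico 0 1),
      HasSum (fun k => (t : ℂ) ^ (n + k) * tc f k) ((t : ℂ) ^ n * f t) := by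
  filter_upwards [self_mem_ae_restrict measurableSet_Ico] with t ht
  have ht1 : ‖(t : ℂ)‖ < 1 := (Complex.norm_of_nonneg ht.1).trans_lt ht.2
  refine ((hasSum_tc_mul_pow hf ht1).mul_left ((t : ℂ) ^ n)).congr_fun fun k => ?_
  rw [pow_add]
  ring

variable [IsFiniteMeasure μ]

lemma integrableOn_pow_Ico (n : ℕ) : IntegrableOn (fun t => t ^ n) (Ico (0 : ℝ) 1) μ :=
  (continuous_pow n).continuousOn.integrableOn_Icc.mono_set Ico_subset_Icc_self

lemma integrableOn_ofReal_pow_mul (n : ℕ) (c : ℂ) :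
    IntegrableOn (fun t : ℝ => (t : ℂ) ^ n * c) (Ico 0 1) μ := by
  have hcont : Continuous fun t : ℝ => (t : ℂ) ^ n * c := by fun_prop
  exact hcont.continuousOn.integrableOn_Icc.mono_set Ico_subset_Icc_self

variable (μ) in
lemma antitone_mom : Antitone (mom μ) := fun m n hmn =>
  setIntegral_mono_on (integrableOn_pow_Ico n) (integrableOn_pow_Ico m) measurableSet_Ico
    fun _ ht => pow_le_pow_of_le_one ht.1 ht.2.le hmn

lemma summable_mom_add_mul_norm_tc (hs : Summable fun k => mom μ k * ‖tc f k‖) (n : ℕ) :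
    Summable fun k => mom μ (n + k) * ‖tc f k‖ :=
  hs.of_nonneg_of_le (fun _ => mul_nonneg (mom_nonneg μ _) (norm_nonneg _)) fun k =>
    mul_le_mul_of_nonneg_right (antitone_mom μ (Nat.le_add_left k n)) (norm_nonneg _)

lemma integrableOn_of_summable_mom_mul_norm_tc (hf : DifferentiableOn ℂ f (ball 0 1))
    (hs : Summable fun k => mom μ k * ‖tc f k‖) :
    IntegrableOn (fun t : ℝ => f t) (Ico 0 1) μ := by
  refine integrable_of_hasSum_of_summable_integral_norm
    (fun k => integrableOn_ofReal_pow_mul k (tc f k)) ?_ ?_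
  · simpa only [integral_norm_ofReal_pow_mul] using hs
  · simpa only [zero_add, pow_zero, one_mul] using ae_hasSum_pow_mul_tc hf 0

lemma hmuCoeff_eq_integral (hf : DifferentiableOn ℂ f (ball 0 1))
    (hs : Summable fun k => mom μ k * ‖tc f k‖) (n : ℕ) :
    hmuCoeff μ f n = ∫ t in Ico (0 : ℝ) 1, (t : ℂ) ^ n * f t ∂μ := by
  have hsum := hasSum_integral_of_summable_integral_norm
    (fun k => integrableOn_ofReal_pow_mul (μ := μ) (n + k) (tc f k))
    (by simpa only [integral_norm_ofReal_pow_mul] using summable_mom_add_mul_norm_tc hs n)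
  simp only [integral_ofReal_pow_mul] at hsum
  rw [hmuCoeff, hsum.tsum_eq]
  exact integral_congr_ae ((ae_hasSum_pow_mul_tc hf n).mono fun _ h => h.tsum_eq)

lemma hmuWD_of_summable_mom_mul_norm_tc (hf : DifferentiableOn ℂ f (ball 0 1))
    (hs : Summable fun k => mom μ k * ‖tc f k‖) : HmuWD μ f := by
  refine ⟨fun n => ?_, fun z hz => ?_⟩
  · simpa only [norm_mom_mul] using summable_mom_add_mul_norm_tc hs n
  · simpa only [hmuCoeff_eq_integral hf hs] using summable_norm_integral_pow_mul
      (integrableOn_of_summable_mom_mul_norm_tc hf hs) (mem_ball_zero_iff.1 hz)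

lemma eqOn_hmu_imu (hf : DifferentiableOn ℂ f (ball 0 1))
    (hs : Summable fun k => mom μ k * ‖tc f k‖) : EqOn (Hmu μ f) (Imu μ f) (ball 0 1) :=
  fun z hz => by
    simp only [Hmu, hmuCoeff_eq_integral hf hs]
    exact (hasSum_integral_pow_mul (integrableOn_of_summable_mom_mul_norm_tc hf hs)
      (mem_ball_zero_iff.1 hz)).tsum_eq

lemma IsLogCarleson.summable_mom_mul_norm_tc (hμ : IsLogCarleson μ 1 1) {s : ℝ} (hs : 0 ≤ s)
    (hf : MemQs s f) : Summable fun k => mom μ k * ‖tc f k‖ := by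
  have hint : ∀ k, IntegrableOn (fun t => t ^ k * ‖tc f k‖) (Ico (0 : ℝ) 1) μ := fun k =>
    (integrableOn_pow_Ico k).mul_const _
  refine summable_of_sum_range_le
    (c := ∫ t in Ico (0 : ℝ) 1, 8 * qsNorm s f * (logWeight t / √(1 - t)) ∂μ)
    (fun k => mul_nonneg (mom_nonneg μ k) (norm_nonneg _)) fun N => ?_
  calc ∑ k ∈ Finset.range N, mom μ k * ‖tc f k‖
      = ∫ t in Ico (0 : ℝ) 1, ∑ k ∈ Finset.range N, t ^ k * ‖tc f k‖ ∂μ := by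
        simp only [integral_finsetSum _ fun k _ => hint k, integral_mul_const, mom]
    _ ≤ ∫ t in Ico (0 : ℝ) 1, 8 * qsNorm s f * (logWeight t / √(1 - t)) ∂μ := by
        refine setIntegral_mono_on (integrable_finsetSum _ fun k _ => hint k)
          (hμ.integrableOn_logWeight_div_sqrt.const_mul _) measurableSet_Ico fun t ht => ?_
        refine (sum_range_pow_mul_norm_tc_le hf.1 ht (B := 4 * qsNorm s f * (2 * logWeight t))
          (fun z hz => ?_) N).trans_eq (by ring)
        have hz1 : ‖z‖ < 1 := by rw [hz, Real.sqrt_lt' one_pos, one_pow]; exact ht.2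
        have hnorm : 0 ≤ 4 * qsNorm s f := by unfold qsNorm; positivity
        exact (hf.norm_le_logWeight hs hz1).trans
          (mul_le_mul_of_nonneg_left (hz ▸ logWeight_sqrt_le ht) hnorm)

end Hankel

section Necessity

/-- The function `log (2 / (1 - z))`, which lies in every `Q_s` and tests the Carleson condition:
on `[0, 1)` it attains the maximal growth `logWeight` of a `Q_s` function. -/
def logTestFn (z : ℂ) : ℂ := Real.log 2 - Complex.log (1 - z)

lemma logTestFn_ofReal {t : ℝ} (ht : t < 1) : logTestFn t = logWeight t := by
  rw [logTestFn, logWeight_eq_sub ht, Complex.ofReal_sub, Complex.ofReal_log (sub_pos.2 ht).le]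
  push_cast
  rfl

lemma hasDerivAt_logTestFn {z : ℂ} (hz : ‖z‖ < 1) : HasDerivAt logTestFn (1 / (1 - z)) z := by
  have hslit : 1 - z ∈ Complex.slitPlane :=
    sub_eq_add_neg (1 : ℂ) z ▸ Complex.mem_slitPlane_of_norm_lt_one (by rwa [norm_neg])
  exact ((((hasDerivAt_id' z).const_sub 1).clog hslit).const_sub _).congr_deriv (by ring)

lemma memQs_logTestFn {s : ℝ} (hs : 0 < s) : MemQs s logTestFn := by
  obtain ⟨K, -, hK⟩ := exists_memQs_and_qsSeminorm_le hs
  refine (hK logTestFn 1 (fun z hz => ?_) fun z hz => ?_).1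
  · exact (hasDerivAt_logTestFn (mem_ball_zero_iff.1 hz)).differentiableAt.differentiableWithinAt
  · rw [(hasDerivAt_logTestFn hz).deriv, norm_div, norm_one]

variable {μ : Measure ℝ} {x : ℝ}

lemma integrableOn_logTestFn_iff :
    IntegrableOn (fun t : ℝ => logTestFn t) (Ico 0 1) μ ↔ IntegrableOn logWeight (Ico 0 1) μ := by
  rw [integrableOn_congr_fun (fun t ht => logTestFn_ofReal ht.2) measurableSet_Ico]
  exact ⟨fun h => h.re, fun h => h.ofReal⟩

variable (μ) in
lemma imu_logTestFn_zero :
    Imu μ logTestFn 0 = (∫ t in Ico (0 : ℝ) 1, logWeight t ∂μ : ℝ) := by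
  rw [← integral_complex_ofReal]
  refine setIntegral_congr_fun measurableSet_Ico fun t ht => ?_
  simp only [mul_zero, _root_.sub_zero, div_one, logTestFn_ofReal ht.2]

lemma integrableOn_mul_logWeight_div_sq (hL : IntegrableOn logWeight (Ico 0 1) μ)
    (hx : x ∈ Ico 0 1) :
    IntegrableOn (fun t => t * logWeight t / (1 - t * x) ^ 2) (Ico 0 1) μ := by
  have hx1 : ‖(x : ℂ)‖ < 1 := (Complex.norm_of_nonneg hx.1).trans_lt hx.2
  refine (integrableOn_mul_div_one_sub_mul_sq (g := fun t => (logWeight t : ℂ)) hL.ofReal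
    hx1).re.congr (.of_forall fun t => ?_)
  simp only [RCLike.re_to_complex]
  norm_cast

lemma deriv_imu_logTestFn (hL : IntegrableOn logWeight (Ico 0 1) μ) (hx : x ∈ Ico 0 1) :
    deriv (Imu μ logTestFn) x =
      (∫ t in Ico (0 : ℝ) 1, t * logWeight t / (1 - t * x) ^ 2 ∂μ : ℝ) := by
  have hx1 : ‖(x : ℂ)‖ < 1 := (Complex.norm_of_nonneg hx.1).trans_lt hx.2
  rw [← integral_complex_ofReal]
  refine (hasDerivAt_integral_div_one_sub_mul (integrableOn_logTestFn_iff.2 hL) hx1).deriv.trans ?_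
  refine setIntegral_congr_fun measurableSet_Ico fun t ht => ?_
  simp only [logTestFn_ofReal ht.2]
  push_cast
  rfl

lemma measureReal_Ico_mul_le_setIntegral [IsFiniteMeasure μ] {g : ℝ → ℝ}
    (hg : IntegrableOn g (Ico 0 1) μ) (hg_nonneg : ∀ t ∈ Ico 0 1, 0 ≤ g t)
    (hg_mono : MonotoneOn g (Ico 0 1)) (hx : x ∈ Ico 0 1) :
    μ.real (Ico x 1) * g x ≤ ∫ t in Ico (0 : ℝ) 1, g t ∂μ := by
  have hsub : Ico x 1 ⊆ Ico 0 1 := Ico_subset_Ico_left hx.1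
  calc μ.real (Ico x 1) * g x = ∫ _ in Ico x 1, g x ∂μ := by rw [setIntegral_const, smul_eq_mul]
    _ ≤ ∫ t in Ico x 1, g t ∂μ :=
        setIntegral_mono_on (integrableOn_const (measure_ne_top _ _)) (hg.mono_set hsub)
          measurableSet_Ico fun t ht => hg_mono hx (hsub ht) ht.1
    _ ≤ ∫ t in Ico (0 : ℝ) 1, g t ∂μ :=
        setIntegral_mono_set hg (ae_restrict_of_forall_mem measurableSet_Ico hg_nonneg)
          hsub.eventuallyLE

lemma monotoneOn_mul_logWeight_div_sq (hx : x ∈ Ico 0 1) :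
    MonotoneOn (fun t => t * logWeight t / (1 - t * x) ^ 2) (Ico 0 1) := by
  intro t ht u hu htu
  have hL : logWeight t ≤ logWeight u := monotoneOn_logWeight ht.2 hu.2 htu
  have hLt : 0 ≤ logWeight t := (logWeight_pos ht).le
  have hu_pos : 0 < 1 - u * x := by nlinarith [hu.1, hu.2, hx.1, hx.2]
  have hxnn := hx.1
  have hunn := hu.1
  have hLu := hLt.trans hL
  dsimp only
  gcongr

lemma mul_logWeight_div_sq_nonneg {t : ℝ} (ht : t ∈ Ico 0 1) (y : ℝ) :
    0 ≤ t * logWeight t / y ^ 2 :=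
  div_nonneg (mul_nonneg ht.1 (logWeight_pos ht).le) (sq_nonneg y)

variable [IsFiniteMeasure μ]

lemma measureReal_Ico_mul_logWeight_le_norm_imu_zero (hL : IntegrableOn logWeight (Ico 0 1) μ)
    (hx : x ∈ Ico 0 1) : μ.real (Ico x 1) * logWeight x ≤ ‖Imu μ logTestFn 0‖ := by
  rw [imu_logTestFn_zero, Complex.norm_real]
  exact (measureReal_Ico_mul_le_setIntegral hL (fun t ht => (logWeight_pos ht).le)
    (monotoneOn_logWeight.mono fun t ht => ht.2) hx).trans (Real.le_norm_self _)

lemma mul_measureReal_Ico_mul_logWeight_le {s : ℝ} (hs : 0 ≤ s)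
    (hL : IntegrableOn logWeight (Ico 0 1) μ) (hQ : MemQs s (Imu μ logTestFn))
    (hx : x ∈ Ico 0 1) :
    x * (μ.real (Ico x 1) * logWeight x) ≤ 16 * qsSeminorm s (Imu μ logTestFn) * (1 - x) := by
  have hx_pos : 0 < 1 - x := sub_pos.2 hx.2
  have hnorm : ‖(x : ℂ)‖ = x := Complex.norm_of_nonneg hx.1
  have hbloch := hQ.one_sub_norm_mul_norm_deriv_le hs (hnorm.trans_lt hx.2)
  rw [deriv_imu_logTestFn hL hx, hnorm, Complex.norm_real] at hbloch
  have hcheb := (measureReal_Ico_mul_le_setIntegral (integrableOn_mul_logWeight_div_sq hL hx)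
    (fun t ht => mul_logWeight_div_sq_nonneg ht _) (monotoneOn_mul_logWeight_div_sq hx) hx).trans
    (Real.le_norm_self _)
  have hden : (1 - x * x) ^ 2 ≤ 4 * (1 - x) ^ 2 := by
    rw [show (1 - x * x) ^ 2 = (1 + x) ^ 2 * (1 - x) ^ 2 by ring]
    gcongr
    nlinarith [hx.1, hx.2]
  have hweight : x * logWeight x / (4 * (1 - x) ^ 2) ≤ x * logWeight x / (1 - x * x) ^ 2 := by
    have hpos : 0 < 1 - x * x := by nlinarith [hx.1]
    have := mul_nonneg hx.1 (logWeight_pos hx).le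
    gcongr
  calc x * (μ.real (Ico x 1) * logWeight x)
      = 4 * (1 - x) * ((1 - x) * (μ.real (Ico x 1) * (x * logWeight x / (4 * (1 - x) ^ 2)))) := by
        field_simp
    _ ≤ 4 * (1 - x) * (4 * qsSeminorm s (Imu μ logTestFn)) := by
        refine mul_le_mul_of_nonneg_left ?_ (by positivity)
        refine (mul_le_mul_of_nonneg_left ?_ hx_pos.le).trans hbloch
        exact (mul_le_mul_of_nonneg_left hweight measureReal_nonneg).trans hcheb
    _ = 16 * qsSeminorm s (Imu μ logTestFn) * (1 - x) := by ring

lemma IsLogCarleson.of_memQs_imu_logTestFn {s : ℝ} (hs : 0 ≤ s)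
    (hint : IntegrableOn (fun t : ℝ => logTestFn t) (Ico 0 1) μ)
    (hQ : MemQs s (Imu μ logTestFn)) : IsLogCarleson μ 1 1 := by
  have hL := integrableOn_logTestFn_iff.1 hint
  refine ⟨16 * qsNorm s (Imu μ logTestFn) + 1, by unfold qsNorm; positivity, fun x hx => ?_⟩
  rw [Real.rpow_one, Real.rpow_one]
  change μ.real (Ico x 1) * logWeight x ≤ _
  have hderiv := mul_measureReal_Ico_mul_logWeight_le hs hL hQ hx
  have hzero := mul_le_mul_of_nonneg_left
    (measureReal_Ico_mul_logWeight_le_norm_imu_zero hL hx) (sub_pos.2 hx.2).le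
  rw [qsNorm_eq_add_qsSeminorm]
  nlinarith [mul_nonneg (norm_nonneg (Imu μ logTestFn 0)) (sub_pos.2 hx.2).le, hx.2]

end Necessity

section Boundedness

variable {μ : Measure ℝ} [IsFiniteMeasure μ] {s₁ s₂ : ℝ}

lemma IsLogCarleson.exists_norm_integral_le (hμ : IsLogCarleson μ 1 1) :
    ∃ C > 0, ∀ (h : ℝ → ℂ) (B : ℝ) (z : ℂ), 0 ≤ B → ‖z‖ < 1 →
      (∀ t ∈ Ico (0 : ℝ) 1, ‖h t‖ ≤ B * (logWeight t / ‖1 - t * z‖ ^ 2)) →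
      ‖∫ t in Ico (0 : ℝ) 1, h t ∂μ‖ ≤ B * (C / ‖1 - z‖) := by
  obtain ⟨C, hC, hker⟩ := hμ.exists_setLIntegral_kernel_le
  refine ⟨C, hC, fun h B z hB hz hle => ?_⟩
  refine (norm_integral_le_lintegral_norm h).trans
    (ENNReal.toReal_le_of_le_ofReal (by positivity) ?_)
  calc ∫⁻ t in Ico (0 : ℝ) 1, ENNReal.ofReal ‖h t‖ ∂μ
      ≤ ∫⁻ t in Ico (0 : ℝ) 1,
          ENNReal.ofReal B * ENNReal.ofReal (logWeight t / ‖1 - t * z‖ ^ 2) ∂μ :=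
        setLIntegral_mono' measurableSet_Ico fun t ht => by
          rw [← ENNReal.ofReal_mul hB]
          exact ENNReal.ofReal_le_ofReal (hle t ht)
    _ = ENNReal.ofReal B * ∫⁻ t in Ico (0 : ℝ) 1,
          ENNReal.ofReal (logWeight t / ‖1 - t * z‖ ^ 2) ∂μ :=
        lintegral_const_mul' _ _ ENNReal.ofReal_ne_top
    _ ≤ ENNReal.ofReal B * ENNReal.ofReal (C / ‖1 - z‖) := by
        gcongr _ * ?_
        exact hker z (mem_ball_zero_iff.2 hz)
    _ = ENNReal.ofReal (B * (C / ‖1 - z‖)) := (ENNReal.ofReal_mul hB).symm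

lemma IsLogCarleson.exists_norm_imu_le (hμ : IsLogCarleson μ 1 1) :
    ∃ C > 0, ∀ (f : ℂ → ℂ) (B : ℝ), 0 ≤ B → IntegrableOn (fun t : ℝ => f t) (Ico 0 1) μ →
      (∀ t : ℝ, t ∈ Ico 0 1 → ‖f t‖ ≤ B * logWeight t) →
      ‖Imu μ f 0‖ ≤ B * C ∧ ∀ z, ‖z‖ < 1 → ‖deriv (Imu μ f) z‖ ≤ B * C / ‖1 - z‖ := by
  obtain ⟨C, hC, hle⟩ := hμ.exists_norm_integral_le
  refine ⟨C, hC, fun f B hB hint hf => ⟨?_, fun z hz => ?_⟩⟩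
  · have h0 := hle (fun t => f t / (1 - t * 0)) B 0 hB (by rw [norm_zero]; exact one_pos)
    simp only [mul_zero, _root_.sub_zero, norm_one, one_pow, div_one] at h0
    simpa only [Imu, mul_zero, _root_.sub_zero, div_one] using h0 hf
  · rw [(show HasDerivAt (Imu μ f) _ z from hasDerivAt_integral_div_one_sub_mul hint hz).deriv,
      mul_div_assoc]
    refine hle _ B z hB hz fun t ht => ?_
    rw [norm_div, norm_mul, norm_pow, Complex.norm_of_nonneg ht.1, ← mul_div_assoc]
    exact div_le_div_of_nonneg_right
      ((mul_le_of_le_one_left (norm_nonneg _) ht.2.le).trans (hf t ht)) (sq_nonneg _)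

lemma IsLogCarleson.integrableOn_of_memQs (hμ : IsLogCarleson μ 1 1) (hs₁ : 0 ≤ s₁) {f : ℂ → ℂ}
    (hf : MemQs s₁ f) : IntegrableOn (fun t : ℝ => f t) (Ico 0 1) μ :=
  integrableOn_of_summable_mom_mul_norm_tc hf.1 (hμ.summable_mom_mul_norm_tc hs₁ hf)

lemma IsLogCarleson.imuBddQs (hμ : IsLogCarleson μ 1 1) (hs₁ : 0 ≤ s₁) (hs₂ : 0 < s₂) :
    ImuBddQs μ s₁ s₂ := by
  obtain ⟨C, hC, hbound⟩ := hμ.exists_norm_imu_le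
  obtain ⟨K, hK, hmem⟩ := exists_memQs_and_qsSeminorm_le hs₂
  have key : ∀ f, MemQs s₁ f → MemQs s₂ (Imu μ f) ∧
      qsNorm s₂ (Imu μ f) ≤ 4 * C * (1 + K) * qsNorm s₁ f := fun f hf => by
    have hint := hμ.integrableOn_of_memQs hs₁ hf
    have hnorm : 0 ≤ 4 * qsNorm s₁ f := by unfold qsNorm; positivity
    obtain ⟨hzero, hderiv⟩ := hbound f (4 * qsNorm s₁ f) hnorm hint fun t ht => by
      have ht_norm : ‖(t : ℂ)‖ = t := Complex.norm_of_nonneg ht.1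
      simpa only [ht_norm] using hf.norm_le_logWeight hs₁ (ht_norm.trans_lt ht.2)
    obtain ⟨hQ, hle⟩ := hmem (Imu μ f) (4 * qsNorm s₁ f * C) (fun z hz =>
      (hasDerivAt_integral_div_one_sub_mul hint
        (mem_ball_zero_iff.1 hz)).differentiableAt.differentiableWithinAt) hderiv
    refine ⟨hQ, ?_⟩
    rw [qsNorm_eq_add_qsSeminorm]
    linarith
  exact ⟨fun f hf => ⟨fun z hz => integrableOn_div_one_sub_mul
    (hμ.integrableOn_of_memQs hs₁ hf) (mem_ball_zero_iff.1 hz), (key f hf).1⟩,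
    4 * C * (1 + K), by positivity, fun f hf => (key f hf).2⟩

lemma IsLogCarleson.hmuBddQs (hμ : IsLogCarleson μ 1 1) (hs₁ : 0 ≤ s₁) (hs₂ : 0 < s₂) :
    HmuBddQs μ s₁ s₂ := by
  obtain ⟨hI, C, hC, hle⟩ := hμ.imuBddQs hs₁ hs₂
  have hHI : ∀ f, MemQs s₁ f → EqOn (Hmu μ f) (Imu μ f) (ball 0 1) := fun f hf =>
    eqOn_hmu_imu hf.1 (hμ.summable_mom_mul_norm_tc hs₁ hf)
  refine ⟨fun f hf => ⟨hmuWD_of_summable_mom_mul_norm_tc hf.1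
    (hμ.summable_mom_mul_norm_tc hs₁ hf), (hI f hf).2.congr (hHI f hf)⟩, C, hC, fun f hf => ?_⟩
  rw [qsNorm_congr (hHI f hf)]
  exact hle f hf

lemma ImuBddQs.isLogCarleson (hs₁ : 0 < s₁) (hs₂ : 0 ≤ s₂) (h : ImuBddQs μ s₁ s₂) :
    IsLogCarleson μ 1 1 := by
  obtain ⟨hwd, hQ⟩ := h.1 logTestFn (memQs_logTestFn hs₁)
  refine .of_memQs_imu_logTestFn hs₂ ?_ hQ
  simpa only [mul_zero, _root_.sub_zero, div_one] using hwd 0 (mem_ball_self one_pos)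

lemma HmuBddQs.isLogCarleson (hs₁ : 0 < s₁) (hs₂ : 0 ≤ s₂) (h : HmuBddQs μ s₁ s₂) :
    IsLogCarleson μ 1 1 := by
  have htest := memQs_logTestFn hs₁
  obtain ⟨hwd, hQ⟩ := h.1 logTestFn htest
  have hsum := hwd.summable_mom_mul_norm_tc
  exact .of_memQs_imu_logTestFn hs₂ (integrableOn_of_summable_mom_mul_norm_tc htest.1 hsum)
    (hQ.congr (eqOn_hmu_imu htest.1 hsum).symm)

end Boundedness

theorem imu_hmu_bounded_Qs_tfae_general (μ : Measure ℝ) [IsFiniteMeasure μ] {s₁ s₂ : ℝ}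
    (hs₁ : 0 < s₁) (hs₂ : 0 < s₂) :
    [ImuBddQs μ s₁ s₂, HmuBddQs μ s₁ s₂, IsLogCarleson μ 1 1].TFAE := by
  tfae_have 1 → 3 := ImuBddQs.isLogCarleson hs₁ hs₂.le
  tfae_have 2 → 3 := HmuBddQs.isLogCarleson hs₁ hs₂.le
  tfae_have 3 → 1 := fun h => h.imuBddQs hs₁.le hs₂
  tfae_have 3 → 2 := fun h => h.hmuBddQs hs₁.le hs₂
  tfae_finish

/-- Theorem 1.7: boundedness of `I_μ` and `H_μ` on the `Q_s` spaces is equivalent to `μ`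
being a `1`-logarithmic `1`-Carleson measure. -/
theorem imu_hmu_bounded_Qs_tfae (μ : Measure ℝ) [IsFiniteMeasure μ]
    (hsupp : μ (Ico (0:ℝ) 1)ᶜ = 0) :
    [ (∃ s : ℝ, 0 < s ∧ ImuBddQs μ s s),
      (∀ s : ℝ, 0 < s → ImuBddQs μ s s),
      (∃ s : ℝ, 0 < s ∧ HmuBddQs μ s s),
      (∀ s : ℝ, 0 < s → HmuBddQs μ s s),
      IsLogCarleson μ 1 1 ].TFAE := by
  have h {s : ℝ} (hs : 0 < s) := imu_hmu_bounded_Qs_tfae_general μ hs hs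
  tfae_have 2 → 1 := fun hI => ⟨1, one_pos, hI 1 one_pos⟩
  tfae_have 4 → 3 := fun hH => ⟨1, one_pos, hH 1 one_pos⟩
  tfae_have 1 → 5 := fun ⟨_, hs, hI⟩ => ((h hs).out 0 2).1 hI
  tfae_have 3 → 5 := fun ⟨_, hs, hH⟩ => ((h hs).out 1 2).1 hH
  tfae_have 5 → 2 := fun hμ _ hs => ((h hs).out 2 0).1 hμ
  tfae_have 5 → 4 := fun hμ _ hs => ((h hs).out 2 1).1 hμ
  tfae_finish

end PaperHankel
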